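/- Let Ω be a bounded open convex set in ℝ² containing the origin in its interior, and suppose r₁ < 1 < r₂ where r₁, r₂ are the radii of inscribed and circumscribed circles centered at the origin. Fix an integer N ≥ 2 and set ω_R(ξ) = (1+|ξ|/R)^{−N}. For integers n ≥ 0 define Γ_n^±(R,h) = R · Σ_{k∈ℤ², |k| > 2ⁿ/R} ω_R(k) |k|^{−1} μ(k/|k|, 2ⁿ/(|k|R)); 𝔅_n^±(R,h) = 2^{−n} R · ( Σ Σ_{k,ℓ∈ℤ², 2ⁿ/R < |k| ≤ R², 2ⁿ/R < |ℓ| ≤ R²} (ω_R(k)ω_R(ℓ)/(|k||ℓ|)) · μ(k/|k|, 2ⁿ/(|k|R)) μ(ℓ/|ℓ|, 2ⁿ/(|ℓ|R)) · (1 + h|ρ*(±k) − ρ*(±ℓ)|)^{−N} )^{1/2}; and 𝔅̃_n^±(R,h) defined in the same way except with the factor (1 + R2^{−n}|ρ*(±k) − ρ*(±ℓ)|)^{−N} in place of (1 + h|ρ*(±k) − ρ*(±ℓ)|)^{−N}. Then there exists a constant C depending only on r₁, r₂ and N such that for all R ≥ 2 and 1 ≤ h ≤ R: 𝒢_Ω(R,h)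 ≤ C Σ_± [ Σ_{n≥0: 2ⁿ ≤ R/h} 𝔅_n^±(R,h) + Σ_{n: R/h < 2ⁿ ≤ R} 𝔅̃_n^±(R,h) + Σ_{n: 2ⁿ > R} Γ_n^±(R,h) ] + C[log R + (R/h)^{1/2}]. -/

import Mathlib

/-!
Since `Ω` contains the disc of radius `r₁`, convexity gives `sΩ + B(0, r₁δ) ⊆ (s + δ)Ω`. Hence the
number of lattice points in `tΩ` lies between the counts of `(t ± 1/(4R))Ω` smoothed by a mollifier
at scale `r₁/(4R)`. Replacing the area of `(t ± 1/(4R))Ω` by that of `tΩ` costs `O(1)`, so it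
suffices to bound the smoothed rest, which has the absolutely convergent Fourier series
`s² ∑ c(m) χ̂(sm)` over `m ≠ 0`, with `χ` the indicator function of `Ω` and
`|c(m)| ≤ C (1 + |m|/R)^(-N-8)`. The frequencies `|m| > R²` contribute `O(1)`.

In the direction of `m`, the transform of `χ` is a one-dimensional oscillatory integral of the
lengths `A` of the slices of `Ω` orthogonal to `m`. Instead of differentiating, one takes the
second difference of `A` with a step `r₁/(8|m|R)`: it multiplies the integral by `2 cos x - 2`,
where `x = π r₁ s/(4R)` does not depend on `m` and lies in `(0, π]`, and dividing by this multiplier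
absorbs the factor `s²` at the cost of `R²`. The function `A` is concave (one-dimensional
Brunn–Minkowski) and at depth `u` below the support line it is at most the cap diameter
`μ(m/|m|, u)`. By concavity the second difference has one sign in the interior, so its `L¹` norm on
an interval telescopes; on the zone of depth about `2ⁿ/(|m|R)` it is at most a constant times
`2⁻ⁿ (|m|R)⁻¹ μ(m/|m|, 2ⁿ/(|m|R))`, and away from both support lines it is `O((|m|R)⁻²)`. The latter
part contributes `O(log R)` after summation over `m`.

There remain the zones near the two support lines. Those at the lower support line of `m` are the
complex conjugates of those at the upper one of `-m`, so one sign bounds both. On the `n`-th zone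
the phases stay within `O(2ⁿ/R)` of `ρ*(m)`. For `2ⁿ ≤ R` a smooth cutoff in time of length `h` and
the expansion of the square bound the quadratic mean by a double sum with decay in
`β |ρ*(k) - ρ*(ℓ)|`, for any `β ≤ h` with `2ⁿβ ≤ R`. The choice `β = h` gives `𝔅_n` and
`β = R 2⁻ⁿ` gives `𝔅̃_n`. For `2ⁿ > R` the triangle inequality gives `Γ_n`, and Minkowski's
inequality collects the zones.
-/

open MeasureTheory Set
open scoped Pointwise RealInnerProductSpace NNReal ENNReal

noncomputable section

abbrev E2 := EuclideanSpace ℝ (Fin 2)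

/-- The embedding of an integer vector into the Euclidean plane. -/
def ek (k : Fin 2 → ℤ) : E2 := (WithLp.equiv 2 (Fin 2 → ℝ)).symm fun i => (k i : ℝ)

/-- Number of lattice points in a set. -/
def latticeCount (S : Set E2) : ℕ := Nat.card {k : Fin 2 → ℤ | ek k ∈ S}

/-- The lattice rest `E_Ω(t) = card(tΩ ∩ ℤ²) − t²·area(Ω)`. -/
def latticeRest (Ω : Set E2) (t : ℝ) : ℝ :=
  (latticeCount (t • Ω) : ℝ) - t ^ 2 * (volume Ω).toReal

/-- The mean square discrepancy `𝒢_Ω(R,h) = ((1/h)∫_R^{R+h} |E_Ω(t)|² dt)^{1/2}`. -/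
def meanSquare (Ω : Set E2) (R h : ℝ) : ℝ :=
  Real.sqrt ((1 / h) * ∫ t in R..(R + h), (latticeRest Ω t) ^ 2)

/-- The support function `ρ*(ξ) = sup {⟨x,ξ⟩ : x ∈ Ω}`. -/
def suppFn (Ω : Set E2) (ξ : E2) : ℝ := sSup ((fun x => ⟪x, ξ⟫) '' Ω)

/-- `μ(θ,δ)`, the diameter of the cap `𝒞(θ,δ) = {x ∈ ∂Ω : ⟨x,θ⟩ ≥ ρ*(θ) − δ}`. -/
def capDiam (Ω : Set E2) (θ : E2) (δ : ℝ) : ℝ :=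
  Metric.diam {x ∈ frontier Ω | suppFn Ω θ - δ ≤ ⟪x, θ⟫}

/-- Curvature bounded below in the generalized sense:
`sup_{θ∈S¹} sup_{δ>0} δ^{-1/2} μ(θ,δ) < ∞`. -/
def CurvBddBelow (Ω : Set E2) : Prop :=
  ∃ K : ℝ, ∀ θ : E2, ‖θ‖ = 1 → ∀ δ : ℝ, 0 < δ → capDiam Ω θ δ ≤ K * Real.sqrt δ

/-- The weight `ω_R(ξ) = (1 + |ξ|/R)^{−N}`. -/
def omegaR (N : ℕ) (R : ℝ) (ξ : E2) : ℝ := (1 + ‖ξ‖ / R) ^ (-(N : ℝ))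

/-- The quantity `𝔅_n^±(R,h)` of Proposition 2.4 (the sign `±` is encoded by `s = ±1`). -/
def Bn (Ω : Set E2) (N : ℕ) (s R h : ℝ) (n : ℕ) : ℝ :=
  2 ^ (-(n : ℝ)) * R * Real.sqrt (∑' p : (Fin 2 → ℤ) × (Fin 2 → ℤ),
    if (2 : ℝ) ^ n / R < ‖ek p.1‖ ∧ ‖ek p.1‖ ≤ R ^ 2 ∧
        (2 : ℝ) ^ n / R < ‖ek p.2‖ ∧ ‖ek p.2‖ ≤ R ^ 2 then
      omegaR N R (ek p.1) * omegaR N R (ek p.2) / (‖ek p.1‖ * ‖ek p.2‖) *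
        capDiam Ω ((‖ek p.1‖)⁻¹ • ek p.1) ((2 : ℝ) ^ n / (‖ek p.1‖ * R)) *
        capDiam Ω ((‖ek p.2‖)⁻¹ • ek p.2) ((2 : ℝ) ^ n / (‖ek p.2‖ * R)) *
        (1 + h * |suppFn Ω (s • ek p.1) - suppFn Ω (s • ek p.2)|) ^ (-(N : ℝ))
    else 0)

/-- The quantity `𝔅̃_n^±(R,h)` of Proposition 2.4, with the factor
`(1 + R 2^{−n}|ρ*(±k) − ρ*(±ℓ)|)^{−N}` instead. -/
def Bnt (Ω : Set E2) (N : ℕ) (s R h : ℝ) (n : ℕ) : ℝ :=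
  2 ^ (-(n : ℝ)) * R * Real.sqrt (∑' p : (Fin 2 → ℤ) × (Fin 2 → ℤ),
    if (2 : ℝ) ^ n / R < ‖ek p.1‖ ∧ ‖ek p.1‖ ≤ R ^ 2 ∧
        (2 : ℝ) ^ n / R < ‖ek p.2‖ ∧ ‖ek p.2‖ ≤ R ^ 2 then
      omegaR N R (ek p.1) * omegaR N R (ek p.2) / (‖ek p.1‖ * ‖ek p.2‖) *
        capDiam Ω ((‖ek p.1‖)⁻¹ • ek p.1) ((2 : ℝ) ^ n / (‖ek p.1‖ * R)) *
        capDiam Ω ((‖ek p.2‖)⁻¹ • ek p.2) ((2 : ℝ) ^ n / (‖ek p.2‖ * R)) *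
        (1 + R * 2 ^ (-(n : ℝ)) * |suppFn Ω (s • ek p.1) - suppFn Ω (s • ek p.2)|) ^ (-(N : ℝ))
    else 0)

/-- The quantity `Γ_n^±(R,h)` of Proposition 2.4. -/
def Gam (Ω : Set E2) (N : ℕ) (R : ℝ) (n : ℕ) : ℝ :=
  R * ∑' k : Fin 2 → ℤ, if (2 : ℝ) ^ n / R < ‖ek k‖ then
    omegaR N R (ek k) * ‖ek k‖⁻¹ *
      capDiam Ω ((‖ek k‖)⁻¹ • ek k) ((2 : ℝ) ^ n / (‖ek k‖ * R))
    else 0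

/-! ### Slices, support function and caps -/

section Slices

/-- The rotation of the plane by a right angle: for a unit vector `θ`, the pair `θ, perp θ` is an
orthonormal frame, in which the slices below are parametrized. -/
def perp (θ : E2) : E2 := !₂[-θ 1, θ 0]

/-- The slice of `Ω` by the line `⟨x, θ⟩ = s`, as a set of coordinates along `perp θ`. -/
def slice (Ω : Set E2) (θ : E2) (s : ℝ) : Set ℝ := {r | s • θ + r • perp θ ∈ Ω}

/-- The length of the slice of `Ω` by the line `⟨x, θ⟩ = s`. -/
def sliceLength (Ω : Set E2) (θ : E2) (s : ℝ) : ℝ := volume.real (slice Ω θ s)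

lemma inner_eq_sum_coords (x y : E2) : ⟪x, y⟫ = x 0 * y 0 + x 1 * y 1 := by
  simp only [PiLp.inner_apply, Fin.sum_univ_two, RCLike.inner_apply, conj_trivial]
  ring

lemma norm_sq_eq_sum_coords (x : E2) : ‖x‖ ^ 2 = x 0 ^ 2 + x 1 ^ 2 := by
  rw [← real_inner_self_eq_norm_sq, inner_eq_sum_coords]; ring

lemma perp_neg (θ : E2) : perp (-θ) = -perp θ := by
  ext i; fin_cases i <;> simp [perp]

variable {θ : E2}

lemma norm_perp (hθ : ‖θ‖ = 1) : ‖perp θ‖ = 1 := by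
  rw [← sq_eq_sq₀ (norm_nonneg _) zero_le_one, norm_sq_eq_sum_coords, ← hθ, norm_sq_eq_sum_coords]
  simp [perp, add_comm]

lemma inner_perp_self (θ : E2) : ⟪perp θ, θ⟫ = 0 := by
  simp [inner_eq_sum_coords, perp]; ring

lemma inner_self_perp (θ : E2) : ⟪θ, perp θ⟫ = 0 := by
  rw [real_inner_comm, inner_perp_self]

lemma inner_frame (hθ : ‖θ‖ = 1) (s r : ℝ) : ⟪s • θ + r • perp θ, θ⟫ = s := by
  simp [inner_add_left, real_inner_smul_left, inner_perp_self, hθ]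

lemma frame_eq_self (hθ : ‖θ‖ = 1) (x : E2) : ⟪x, θ⟫ • θ + ⟪x, perp θ⟫ • perp θ = x := by
  have hsq : θ 0 ^ 2 + θ 1 ^ 2 = 1 := by rw [← norm_sq_eq_sum_coords, hθ, one_pow]
  ext i
  fin_cases i <;> simp [inner_eq_sum_coords, perp]
  · linear_combination x 0 * hsq
  · linear_combination x 1 * hsq

lemma continuous_frame (θ : E2) : Continuous fun p : ℝ × ℝ => p.1 • θ + p.2 • perp θ := by
  fun_prop

lemma measurePreserving_frame (hθ : ‖θ‖ = 1) :
    MeasurePreserving (fun p : ℝ × ℝ => p.1 • θ + p.2 • perp θ) volume volume := by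
  have hon : Orthonormal ℝ ![θ, perp θ] := by
    simp [hθ, norm_perp hθ, inner_self_perp]
  let b₀ := basisOfOrthonormalOfCardEqFinrank hon (by simp)
  have hb₀ : (b₀ : Fin 2 → E2) = ![θ, perp θ] := coe_basisOfOrthonormalOfCardEqFinrank hon (by simp)
  let b := b₀.toOrthonormalBasis (by rw [hb₀]; exact hon)
  have hb : (b : Fin 2 → E2) = ![θ, perp θ] := by simp [b, hb₀]
  convert (b.measurePreserving_repr_symm.comp (PiLp.volume_preserving_toLp (Fin 2))).comp
    ((volume_preserving_finTwoArrow ℝ).symm) using 1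
  ext1 p
  simp only [Function.comp]
  rw [← OrthonormalBasis.sum_repr_symm]
  simp [hb, Fin.sum_univ_two, MeasurableEquiv.finTwoArrow]

variable {Ω : Set E2}

lemma slice_neg (s : ℝ) : slice Ω (-θ) s = -slice Ω θ (-s) := by
  ext r
  simp [slice, perp_neg]

lemma sliceLength_neg (s : ℝ) : sliceLength Ω (-θ) s = sliceLength Ω θ (-s) := by
  rw [sliceLength, slice_neg, Measure.real, Measure.measure_neg, sliceLength, Measure.real]

lemma sliceLength_nonneg (s : ℝ) : 0 ≤ sliceLength Ω θ s := measureReal_nonneg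

lemma isOpen_slice (hΩ : IsOpen Ω) (s : ℝ) : IsOpen (slice Ω θ s) :=
  hΩ.preimage (f := fun r : ℝ => s • θ + r • perp θ) (by fun_prop)

lemma add_mem_slice (hΩ : Convex ℝ Ω) {s s' x y a b : ℝ} (hx : x ∈ slice Ω θ s)
    (hy : y ∈ slice Ω θ s') (ha : 0 ≤ a) (hb : 0 ≤ b) (hab : a + b = 1) :
    a * x + b * y ∈ slice Ω θ (a * s + b * s') := by
  have hcomb := hΩ hx hy ha hb hab
  rw [slice, mem_ofPred_eq]
  convert hcomb using 1
  module

lemma convex_slice (hΩ : Convex ℝ Ω) (s : ℝ) : Convex ℝ (slice Ω θ s) := by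
  intro x hx y hy a b ha hb hab
  simpa only [smul_eq_mul, ← add_mul, hab, one_mul] using add_mem_slice hΩ hx hy ha hb hab

lemma slice_subset_Icc (hθ : ‖θ‖ = 1) {r : ℝ} (hΩ : Ω ⊆ Metric.closedBall 0 r) (s : ℝ) :
    slice Ω θ s ⊆ Icc (-r) r := by
  intro x hx
  have hnorm : ‖s • θ + x • perp θ‖ ≤ r := mem_closedBall_zero_iff.1 (hΩ hx)
  have hcoord : ⟪s • θ + x • perp θ, perp θ⟫ = x := by
    simp [inner_add_left, real_inner_smul_left, inner_self_perp, norm_perp hθ]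
  have hcs := abs_real_inner_le_norm (s • θ + x • perp θ) (perp θ)
  rw [hcoord, norm_perp hθ, mul_one] at hcs
  exact abs_le.1 (hcs.trans hnorm)

lemma isBounded_slice (hθ : ‖θ‖ = 1) (hΩ : Bornology.IsBounded Ω) (s : ℝ) :
    Bornology.IsBounded (slice Ω θ s) := by
  obtain ⟨r, hr⟩ := hΩ.subset_closedBall 0
  exact (Metric.isBounded_Icc _ _).subset (slice_subset_Icc hθ hr s)

lemma sliceLength_le (hθ : ‖θ‖ = 1) {r : ℝ} (hr : 0 ≤ r) (hΩ : Ω ⊆ Metric.closedBall 0 r) (s : ℝ) :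
    sliceLength Ω θ s ≤ 2 * r := by
  calc sliceLength Ω θ s ≤ volume.real (Icc (-r) r) :=
        measureReal_mono (slice_subset_Icc hθ hΩ s) (by simp)
    _ = 2 * r := by rw [Real.volume_real_Icc_of_le (by linarith)]; ring

lemma eq_Ioo_of_isOpen_of_isConnected {S : Set ℝ} (ho : IsOpen S) (hc : IsConnected S)
    (hb : Bornology.IsBounded S) : S = Ioo (sInf S) (sSup S) := by
  refine subset_antisymm ?_ (hc.Ioo_csInf_csSup_subset hb.bddBelow hb.bddAbove)
  rw [← interior_Icc]
  exact interior_maximal (subset_Icc_csInf_csSup hb.bddBelow hb.bddAbove) ho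

lemma exists_slice_eq_Ioo (hconv : Convex ℝ Ω) (hopen : IsOpen Ω) (hbdd : Bornology.IsBounded Ω)
    (hθ : ‖θ‖ = 1) {s : ℝ} (hne : (slice Ω θ s).Nonempty) :
    ∃ p q : ℝ, p < q ∧ slice Ω θ s = Ioo p q ∧
      s • θ + p • perp θ ∈ frontier Ω ∧ s • θ + q • perp θ ∈ frontier Ω := by
  have hS := eq_Ioo_of_isOpen_of_isConnected (isOpen_slice hopen s)
    ⟨hne, (convex_slice hconv s).isPreconnected⟩ (isBounded_slice hθ hbdd s)
  set p := sInf (slice Ω θ s)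
  set q := sSup (slice Ω θ s)
  have hpq : p < q := by rwa [hS, nonempty_Ioo] at hne
  have mem_frontier {z : ℝ} (hz : z ∈ closure (slice Ω θ s)) (hz' : z ∉ slice Ω θ s) :
      s • θ + z • perp θ ∈ frontier Ω := by
    rw [hopen.frontier_eq]
    exact ⟨map_mem_closure (f := fun r : ℝ => s • θ + r • perp θ) (by fun_prop) hz fun _ h => h,
      hz'⟩
  rw [hS, closure_Ioo hpq.ne] at mem_frontier
  exact ⟨p, q, hpq, hS, mem_frontier (left_mem_Icc.2 hpq.le) (by simp),
    mem_frontier (right_mem_Icc.2 hpq.le) (by simp)⟩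

lemma exists_add_eq_of_mem_Ioo {a b p q p' q' r : ℝ} (hpq : p < q)
    (hpq' : p' < q') (hr : r ∈ Ioo (a * p + b * p') (a * q + b * q')) :
    ∃ x ∈ Ioo p q, ∃ y ∈ Ioo p' q', a * x + b * y = r := by
  have hd : 0 < a * q + b * q' - (a * p + b * p') := by linarith [hr.1, hr.2]
  set l := (r - (a * p + b * p')) / (a * q + b * q' - (a * p + b * p')) with hl
  have hl0 : 0 < l := div_pos (by linarith [hr.1]) hd
  have hl1 : l < 1 := by rw [hl, div_lt_one hd]; linarith [hr.2]
  have hlr : l * (a * q + b * q' - (a * p + b * p')) = r - (a * p + b * p') :=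
    div_mul_cancel₀ _ hd.ne'
  exact ⟨p + l * (q - p), by constructor <;> nlinarith, p' + l * (q' - p'),
    by constructor <;> nlinarith, by linear_combination hlr⟩

/-- One-dimensional Brunn–Minkowski. -/
lemma concaveOn_sliceLength (hconv : Convex ℝ Ω) (hopen : IsOpen Ω) (hbdd : Bornology.IsBounded Ω)
    (hθ : ‖θ‖ = 1) : ConcaveOn ℝ {s | (slice Ω θ s).Nonempty} (sliceLength Ω θ) := by
  refine ⟨?_, ?_⟩
  · rintro s ⟨x, hx⟩ s' ⟨y, hy⟩ a b ha hb hab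
    exact ⟨_, add_mem_slice hconv hx hy ha hb hab⟩
  rintro s hs s' hs' a b ha hb hab
  obtain ⟨p, q, hpq, hslice, -⟩ := exists_slice_eq_Ioo hconv hopen hbdd hθ hs
  obtain ⟨p', q', hpq', hslice', -⟩ := exists_slice_eq_Ioo hconv hopen hbdd hθ hs'
  have hsub : Ioo (a * p + b * p') (a * q + b * q') ⊆ slice Ω θ (a * s + b * s') := by
    intro r hr
    obtain ⟨x, hx, y, hy, rfl⟩ := exists_add_eq_of_mem_Ioo hpq hpq' hr
    exact add_mem_slice hconv (hslice ▸ hx) (hslice' ▸ hy) ha hb hab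
  calc a • sliceLength Ω θ s + b • sliceLength Ω θ s'
      = (a * q + b * q') - (a * p + b * p') := by
        rw [sliceLength, sliceLength, hslice, hslice', Real.volume_real_Ioo_of_le hpq.le,
          Real.volume_real_Ioo_of_le hpq'.le, smul_eq_mul, smul_eq_mul]
        ring
    _ = volume.real (Ioo (a * p + b * p') (a * q + b * q')) := by
        rw [Real.volume_real_Ioo_of_le (by gcongr)]
    _ ≤ sliceLength Ω θ (a • s + b • s') :=
        measureReal_mono hsub (isBounded_slice hθ hbdd _).measure_lt_top.ne

lemma integrable_sliceLength (hmeas : MeasurableSet Ω) (hvol : volume Ω ≠ ⊤) (hθ : ‖θ‖ = 1) :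
    Integrable (sliceLength Ω θ) := by
  have hmp := measurePreserving_frame hθ
  refine Measure.integrable_measure_prodMk_left (hmp.measurable hmeas) ?_
  rwa [← Measure.volume_eq_prod, hmp.measure_preimage hmeas.nullMeasurableSet]

/-- Fubini along the lines orthogonal to `θ`. -/
lemma setIntegral_comp_inner {E : Type*} [NormedAddCommGroup E] [NormedSpace ℝ E] [CompleteSpace E]
    (hmeas : MeasurableSet Ω) (hθ : ‖θ‖ = 1) {F : ℝ → E}
    (hF : IntegrableOn (fun y : E2 => F ⟪y, θ⟫) Ω) :
    ∫ y in Ω, F ⟪y, θ⟫ = ∫ s, sliceLength Ω θ s • F s := by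
  have hmp := measurePreserving_frame hθ
  have hInt := (integrable_indicator_iff hmeas).2 hF
  have hslice (s r : ℝ) : Ω.indicator (fun y : E2 => F ⟪y, θ⟫) (s • θ + r • perp θ)
      = (slice Ω θ s).indicator (fun _ => F s) r := by
    by_cases hr : s • θ + r • perp θ ∈ Ω <;> simp [slice, hr, inner_frame hθ]
  have hcomp := (hmp.integrable_comp hInt.aestronglyMeasurable).2 hInt
  simp only [Function.comp_def, hslice, Measure.volume_eq_prod] at hcomp
  have hslice_meas (s : ℝ) : MeasurableSet (slice Ω θ s) :=
    (continuous_frame θ).measurable.comp measurable_prodMk_left hmeas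
  calc ∫ y in Ω, F ⟪y, θ⟫
      = ∫ p : ℝ × ℝ, (slice Ω θ p.1).indicator (fun _ => F p.1) p.2 := by
        rw [← integral_indicator hmeas, ← hmp.map_eq, integral_map hmp.aemeasurable
          (by rw [hmp.map_eq]; exact hInt.aestronglyMeasurable)]
        simp only [hslice]
    _ = ∫ s, ∫ r, (slice Ω θ s).indicator (fun _ => F s) r := integral_prod _ hcomp
    _ = ∫ s, sliceLength Ω θ s • F s := by
        simp only [integral_indicator (hslice_meas _), setIntegral_const, sliceLength]

lemma suppFn_smul {c : ℝ} (hc : 0 ≤ c) (ξ : E2) : suppFn Ω (c • ξ) = c * suppFn Ω ξ := by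
  rw [suppFn, suppFn, ← smul_eq_mul, ← Real.sSup_smul_of_nonneg hc]
  congr 1
  ext z
  simp [Set.mem_smul_set, real_inner_smul_right]

lemma neg_suppFn_neg (ξ : E2) : -suppFn Ω (-ξ) = sInf ((fun x => ⟪x, ξ⟫) '' Ω) := by
  rw [suppFn, Real.sInf_def, ← image_neg_eq_neg, image_image]
  simp only [inner_neg_right]

lemma setOf_slice_nonempty (hθ : ‖θ‖ = 1) :
    {s | (slice Ω θ s).Nonempty} = (fun x => ⟪x, θ⟫) '' Ω := by
  ext s
  constructor
  · rintro ⟨r, hr⟩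
    exact ⟨_, hr, inner_frame hθ s r⟩
  · rintro ⟨x, hx, rfl⟩
    exact ⟨⟪x, perp θ⟫, by rwa [slice, mem_ofPred_eq, frame_eq_self hθ]⟩

lemma isBounded_image_inner (hΩ : Bornology.IsBounded Ω) (ξ : E2) :
    Bornology.IsBounded ((fun x => ⟪x, ξ⟫) '' Ω) := by
  simpa only [coe_innerSL_apply, real_inner_comm] using (innerSL ℝ ξ).lipschitz.isBounded_image hΩ

lemma setOf_slice_nonempty_eq_Ioo (hconv : Convex ℝ Ω) (hopen : IsOpen Ω)
    (hbdd : Bornology.IsBounded Ω) (hne : Ω.Nonempty) (hθ : ‖θ‖ = 1) :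
    {s | (slice Ω θ s).Nonempty} = Ioo (-suppFn Ω (-θ)) (suppFn Ω θ) := by
  have himage := setOf_slice_nonempty (Ω := Ω) hθ
  have hset : {s | (slice Ω θ s).Nonempty} =
      Prod.fst '' ((fun p : ℝ × ℝ => p.1 • θ + p.2 • perp θ) ⁻¹' Ω) := by
    ext s
    simp [slice, Set.Nonempty]
  have ho : IsOpen ((fun x => ⟪x, θ⟫) '' Ω) := by
    rw [← himage, hset]
    exact isOpenMap_fst _ (hopen.preimage (continuous_frame θ))
  have hc : IsConnected ((fun x => ⟪x, θ⟫) '' Ω) :=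
    (hconv.isConnected hne).image _ (by fun_prop)
  rw [himage, neg_suppFn_neg, suppFn]
  exact eq_Ioo_of_isOpen_of_isConnected ho hc (isBounded_image_inner hbdd θ)

lemma le_suppFn_of_ball_subset {r : ℝ} (hr : 0 < r) (hball : Metric.ball 0 r ⊆ Ω)
    (hbdd : Bornology.IsBounded Ω) (hθ : ‖θ‖ = 1) : r ≤ suppFn Ω θ := by
  refine le_of_forall_lt_imp_le_of_dense fun s hs => ?_
  have hmem : max s 0 • θ ∈ Ω := by
    refine hball (mem_ball_zero_iff.2 ?_)
    rw [norm_smul, hθ, mul_one, Real.norm_of_nonneg (le_max_right _ _)]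
    exact max_lt hs hr
  have hle := le_csSup (isBounded_image_inner hbdd θ).bddAbove ⟨_, hmem, rfl⟩
  simp only [real_inner_smul_left, real_inner_self_eq_norm_sq, hθ, one_pow, mul_one] at hle
  exact (le_max_left s 0).trans hle

lemma capDiam_nonneg (δ : ℝ) : 0 ≤ capDiam Ω θ δ := Metric.diam_nonneg

lemma isBounded_frontier (hΩ : Bornology.IsBounded Ω) : Bornology.IsBounded (frontier Ω) :=
  hΩ.closure.subset frontier_subset_closure

lemma monotone_capDiam (hΩ : Bornology.IsBounded Ω) : Monotone (capDiam Ω θ) := fun δ δ' h =>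
  Metric.diam_mono (fun _ hx => ⟨hx.1, by linarith [hx.2]⟩)
    ((isBounded_frontier hΩ).subset (sep_subset _ _))

lemma capDiam_le {r : ℝ} (hr : 0 ≤ r) (hΩ : Ω ⊆ Metric.closedBall 0 r) (δ : ℝ) :
    capDiam Ω θ δ ≤ 2 * r :=
  (Metric.diam_mono ((sep_subset _ _).trans (frontier_subset_closure.trans
    (closure_minimal hΩ Metric.isClosed_closedBall))) Metric.isBounded_closedBall).trans
    (Metric.diam_closedBall hr)

/-- The slice at depth `u` below the support line is a chord of the cap of height `u`. -/
lemma sliceLength_le_capDiam (hconv : Convex ℝ Ω) (hopen : IsOpen Ω) (hbdd : Bornology.IsBounded Ω)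
    (hθ : ‖θ‖ = 1) (u : ℝ) : sliceLength Ω θ (suppFn Ω θ - u) ≤ capDiam Ω θ u := by
  rcases (slice Ω θ (suppFn Ω θ - u)).eq_empty_or_nonempty with hempty | hne
  · rw [sliceLength, hempty, measureReal_empty]
    exact capDiam_nonneg u
  obtain ⟨p, q, hpq, hslice, hp, hq⟩ := exists_slice_eq_Ioo hconv hopen hbdd hθ hne
  calc sliceLength Ω θ (suppFn Ω θ - u) = q - p := by
        rw [sliceLength, hslice, Real.volume_real_Ioo_of_le hpq.le]
    _ = dist ((suppFn Ω θ - u) • θ + q • perp θ) ((suppFn Ω θ - u) • θ + p • perp θ) := by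
        rw [dist_add_left, dist_eq_norm, ← sub_smul, norm_smul, norm_perp hθ, mul_one,
          Real.norm_of_nonneg (sub_pos.2 hpq).le]
    _ ≤ capDiam Ω θ u := Metric.dist_le_diam_of_mem
        ((isBounded_frontier hbdd).subset (sep_subset _ _))
        ⟨hq, (inner_frame hθ _ _).ge⟩ ⟨hp, (inner_frame hθ _ _).ge⟩

end Slices

/-! ### Second differences of concave profiles -/

section SecondDifferences

/-- The symmetric second difference of `a` with step `τ`. -/
def secondDiff (a : ℝ → ℝ) (τ u : ℝ) : ℝ := a (u + τ) - 2 * a u + a (u - τ)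

lemma integrable_secondDiff {a : ℝ → ℝ} (ha : Integrable a) (τ : ℝ) :
    Integrable (secondDiff a τ) :=
  ((ha.comp_add_right τ).sub (ha.const_mul 2)).add (ha.comp_sub_right τ)

lemma integral_secondDiff {a : ℝ → ℝ} (ha : Integrable a) (τ v z : ℝ) :
    ∫ u in v..z, secondDiff a τ u =
      ((∫ u in z..(z + τ), a u) - ∫ u in (z - τ)..z, a u) -
        ((∫ u in v..(v + τ), a u) - ∫ u in (v - τ)..v, a u) := by
  have hii (x y : ℝ) : IntervalIntegrable a volume x y := ha.intervalIntegrable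
  have hadd : IntervalIntegrable (fun u => a (u + τ)) volume v z :=
    (ha.comp_add_right τ).intervalIntegrable
  have hsub : IntervalIntegrable (fun u => a (u - τ)) volume v z :=
    (ha.comp_sub_right τ).intervalIntegrable
  have hsplit : ∫ u in v..z, secondDiff a τ u =
      (∫ u in (v + τ)..(z + τ), a u) - 2 * (∫ u in v..z, a u) + ∫ u in (v - τ)..(z - τ), a u := by
    rw [← intervalIntegral.integral_comp_add_right, ← intervalIntegral.integral_comp_sub_right,
      ← intervalIntegral.integral_const_mul,
      ← intervalIntegral.integral_sub hadd ((hii _ _).const_mul 2),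
      ← intervalIntegral.integral_add (hadd.sub ((hii _ _).const_mul 2)) hsub]
    rfl
  have upper := intervalIntegral.integral_add_adjacent_intervals (hii v (v + τ)) (hii _ (z + τ))
  have upper' := intervalIntegral.integral_add_adjacent_intervals (hii v z) (hii z (z + τ))
  have lower := intervalIntegral.integral_add_adjacent_intervals (hii (v - τ) v) (hii v z)
  have lower' := intervalIntegral.integral_add_adjacent_intervals (hii (v - τ) (z - τ)) (hii _ z)
  rw [hsplit]
  linarith

lemma secondDiff_nonpos_of_concaveOn {s : Set ℝ} {a : ℝ → ℝ} (ha : ConcaveOn ℝ s a) {τ u : ℝ}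
    (h₁ : u + τ ∈ s) (h₂ : u - τ ∈ s) : secondDiff a τ u ≤ 0 := by
  have hmid := ha.2 h₁ h₂ (by norm_num : (0 : ℝ) ≤ 1 / 2) (by norm_num : (0 : ℝ) ≤ 1 / 2)
    (by norm_num)
  simp only [smul_eq_mul] at hmid
  rw [show 1 / 2 * (u + τ) + 1 / 2 * (u - τ) = u by ring] at hmid
  unfold secondDiff
  linarith

/-- The second differences of a concave function have a sign, so their integral telescopes to
first differences near the two end points. -/
lemma setIntegral_abs_secondDiff_le {s : Set ℝ} {a : ℝ → ℝ} (hint : Integrable a)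
    (hconc : ConcaveOn ℝ s a) {v z τ D : ℝ} (hτ : 0 ≤ τ) (hvz : v ≤ z)
    (hs : Icc (v - τ) (z + τ) ⊆ s) (hD : ∀ y ∈ Icc (v - τ) z, |a (y + τ) - a y| ≤ D) :
    ∫ u in Ioc v z, |secondDiff a τ u| ≤ 2 * τ * D := by
  have habs : ∀ u ∈ Ioc v z, |secondDiff a τ u| = -secondDiff a τ u := fun u hu =>
    abs_of_nonpos (secondDiff_nonpos_of_concaveOn hconc
      (hs ⟨by linarith [hu.1], by linarith [hu.2]⟩) (hs ⟨by linarith [hu.1], by linarith [hu.2]⟩))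
  have shifted_diff_le {x : ℝ} (hx : x ∈ Icc v z) :
      |(∫ u in x..(x + τ), a u) - ∫ u in (x - τ)..x, a u| ≤ D * τ := by
    have hshift : (∫ u in x..(x + τ), a u) = ∫ u in (x - τ)..x, a (u + τ) := by
      rw [intervalIntegral.integral_comp_add_right (f := a), sub_add_cancel]
    rw [hshift, ← intervalIntegral.integral_sub (hint.comp_add_right τ).intervalIntegrable
      hint.intervalIntegrable]
    have hnorm := intervalIntegral.norm_integral_le_of_norm_le_const (a := x - τ) (b := x)
      (f := fun u => a (u + τ) - a u) (C := D) fun y hy => by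
        rw [uIoc_of_le (by linarith)] at hy
        exact hD y ⟨by linarith [hy.1, hx.1], by linarith [hy.2, hx.2]⟩
    rwa [sub_sub_cancel, abs_of_nonneg hτ] at hnorm
  rw [setIntegral_congr_fun measurableSet_Ioc habs, integral_neg,
    ← intervalIntegral.integral_of_le hvz, integral_secondDiff hint]
  linarith [(abs_le.1 (shifted_diff_le (left_mem_Icc.2 hvz))).2,
    (abs_le.1 (shifted_diff_le (right_mem_Icc.2 hvz))).1]

lemma concaveOn_comp_const_sub {s : Set ℝ} {a : ℝ → ℝ} (ha : ConcaveOn ℝ s a) (b : ℝ) :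
    ConcaveOn ℝ ((fun u => b - u) ⁻¹' s) fun u => a (b - u) :=
  ha.comp_affineMap (AffineMap.const ℝ ℝ b - AffineMap.id ℝ ℝ)

/-- A nonnegative function concave on `(0, H)` and zero outside: the shape of the slice lengths of a
convex domain of width `H`, as a function of the depth below a support line. -/
structure ConcaveProfile (a : ℝ → ℝ) (H : ℝ) : Prop where
  nonneg : ∀ u, 0 ≤ a u
  concaveOn : ConcaveOn ℝ (Ioo 0 H) a
  eq_zero : ∀ u ∉ Ioo 0 H, a u = 0

namespace ConcaveProfile

variable {a M : ℝ → ℝ} {H : ℝ}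

lemma reflect (h : ConcaveProfile a H) : ConcaveProfile (fun u => a (H - u)) H where
  nonneg u := h.nonneg _
  concaveOn := by
    simpa only [preimage_const_sub_Ioo, sub_self, sub_zero] using
      concaveOn_comp_const_sub h.concaveOn H
  eq_zero u hu := h.eq_zero _ (by simpa [and_comm] using hu)

lemma mul_le_mul_of_le (h : ConcaveProfile a H) {y z : ℝ} (hy : 0 < y) (hyz : y ≤ z) :
    y * a z ≤ z * a y := by
  rcases hyz.eq_or_lt with rfl | hlt
  · exact le_rfl
  rcases le_or_gt H z with hz | hz
  · rw [h.eq_zero z fun hz' => hz.not_gt hz'.2, mul_zero]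
    exact mul_nonneg (hy.trans hlt).le (h.nonneg y)
  have secant_le : ∀ x ∈ Ioo 0 y, (y - x) * a z ≤ (z - x) * a y := by
    intro x hx
    have hslope := h.concaveOn.slope_anti_adjacent ⟨hx.1, hx.2.trans (hlt.trans hz)⟩
      ⟨hy.trans hlt, hz⟩ hx.2 hlt
    rw [div_le_div_iff₀ (sub_pos.2 hlt) (sub_pos.2 hx.2)] at hslope
    nlinarith [h.nonneg x]
  have tendsto_sub_mul (c d : ℝ) :
      Filter.Tendsto (fun x : ℝ => (c - x) * d) (nhdsWithin 0 (Ioi 0)) (nhds (c * d)) := by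
    have hcont : Continuous fun x : ℝ => (c - x) * d := by fun_prop
    simpa using (hcont.tendsto 0).mono_left nhdsWithin_le_nhds
  exact le_of_tendsto_of_tendsto (tendsto_sub_mul y (a z)) (tendsto_sub_mul z (a y))
    (Filter.mem_of_superset (Ioo_mem_nhdsGT hy) secant_le)

lemma sub_mul_le_sub_mul_of_le (h : ConcaveProfile a H) {y z : ℝ} (hz : z < H) (hyz : y ≤ z) :
    (H - z) * a y ≤ (H - y) * a z := by
  simpa using h.reflect.mul_le_mul_of_le (sub_pos.2 hz) (sub_le_sub_left hyz H)

lemma abs_sub_le (h : ConcaveProfile a H) {y τ V w : ℝ} (hτ : 0 ≤ τ) (hw : 0 < w) (hwy : w ≤ y)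
    (hH : w ≤ H - (y + τ)) (hy : a y ≤ V) (hyτ : a (y + τ) ≤ V) :
    |a (y + τ) - a y| ≤ τ * V / w := by
  have hV : 0 ≤ V := (h.nonneg y).trans hy
  have left : y * (a (y + τ) - a y) ≤ τ * a y := by
    linarith [h.mul_le_mul_of_le (y := y) (z := y + τ) (by linarith) (by linarith)]
  have right : (H - (y + τ)) * (a y - a (y + τ)) ≤ τ * a (y + τ) := by
    linarith [h.sub_mul_le_sub_mul_of_le (y := y) (z := y + τ) (by linarith) (by linarith)]
  rw [abs_le, ← neg_div, div_le_iff₀ hw, le_div_iff₀ hw]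
  constructor
  · rcases le_total (a y) (a (y + τ)) with hle | hle <;> nlinarith
  · rcases le_total (a y) (a (y + τ)) with hle | hle <;> nlinarith

lemma le_three_mul (h : ConcaveProfile a H) (hM : Monotone M) (haM : ∀ u, a u ≤ M u) {u v : ℝ}
    (hv : 0 < v) (hu : u ≤ 3 * v) : a u ≤ 3 * M v := by
  have hMv : 0 ≤ M v := (h.nonneg v).trans (haM v)
  rcases le_or_gt u v with huv | huv
  · linarith [haM u, hM huv]
  · have hratio := h.mul_le_mul_of_le hv huv.le
    refine le_of_mul_le_mul_left ?_ hv
    nlinarith [haM v, h.nonneg v]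

lemma secondDiff_eq_zero (h : ConcaveProfile a H) {τ u : ℝ} (hτ : 0 ≤ τ) (hu : u ≤ -τ) :
    secondDiff a τ u = 0 := by
  have ha {x : ℝ} (hx : x ≤ 0) : a x = 0 := h.eq_zero x fun hx' => hx.not_gt hx'.1
  rw [secondDiff, ha (by linarith), ha (by linarith), ha (by linarith)]
  ring

end ConcaveProfile

/-- The `n`-th dyadic zone of depths `u` below a support line, cut off at depth `q`. The zone
`n = 0` contains all `u < 2δ`, including negative ones. -/
def depthZone (q δ : ℝ) (n : ℕ) : Set ℝ :=
  {u | u < q ∧ u < 2 ^ (n + 1) * δ ∧ (n = 0 ∨ 2 ^ n * δ ≤ u)}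

lemma depthZone_zero (q δ : ℝ) : depthZone q δ 0 = Iio (min q (2 * δ)) := by
  ext u
  simp [depthZone]

lemma depthZone_of_ne_zero (q δ : ℝ) {n : ℕ} (hn : n ≠ 0) :
    depthZone q δ n = Ico (2 ^ n * δ) (min q (2 * (2 ^ n * δ))) := by
  ext u
  simp only [depthZone, hn, false_or, mem_ofPred_eq, mem_Ico, lt_min_iff, pow_succ]
  rw [show (2 : ℝ) ^ n * 2 * δ = 2 * (2 ^ n * δ) by ring]
  tauto

lemma measurableSet_depthZone (q δ : ℝ) (n : ℕ) : MeasurableSet (depthZone q δ n) := by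
  rcases eq_or_ne n 0 with rfl | hn
  · rw [depthZone_zero]; exact measurableSet_Iio
  · rw [depthZone_of_ne_zero q δ hn]; exact measurableSet_Ico

lemma sum_indicator_depthZone (q : ℝ) {δ : ℝ} (hδ : 0 ≤ δ) (u : ℝ) (K : ℕ) :
    ∑ n ∈ Finset.range (K + 1), (depthZone q δ n).indicator (fun _ => (1 : ℝ)) u
      = {u | u < q ∧ u < 2 ^ (K + 1) * δ}.indicator (fun _ => (1 : ℝ)) u := by
  classical
  induction K with
  | zero => simp [depthZone]
  | succ K ih =>
    have hmono : (2 : ℝ) ^ (K + 1) * δ ≤ 2 ^ (K + 1 + 1) * δ := by gcongr <;> norm_num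
    rw [Finset.sum_range_succ, ih]
    simp only [indicator_apply, depthZone, mem_ofPred_eq]
    split_ifs <;> first | rfl | (exfalso; grind) | norm_num

namespace ConcaveProfile

variable {a M : ℝ → ℝ} {H : ℝ}

lemma setIntegral_depthZone_zero_le (h : ConcaveProfile a H) (hM : Monotone M)
    (haM : ∀ u, a u ≤ M u) {δ τ : ℝ} (hδ : 0 < δ) (hτ : 0 ≤ τ) (hτδ : τ ≤ δ) (q : ℝ) :
    ∫ u in depthZone q δ 0, |secondDiff a τ u| ≤ 36 * δ * M δ := by
  have hMδ : 0 ≤ M δ := (h.nonneg δ).trans (haM δ)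
  have hle (u : ℝ) : (depthZone q δ 0).indicator (fun u => |secondDiff a τ u|) u ≤
      (Ioc (-δ) (2 * δ)).indicator (fun _ => 12 * M δ) u := by
    refine indicator_le' (fun u hu => ?_)
      (fun u _ => indicator_nonneg (fun _ _ => by positivity) u) u
    rw [depthZone_zero, mem_Iio, lt_min_iff] at hu
    rcases le_or_gt u (-δ) with hl | hl
    · rw [h.secondDiff_eq_zero hτ (by linarith), abs_zero]
      exact indicator_nonneg (fun _ _ => by positivity) _
    · rw [indicator_of_mem (show u ∈ Ioc (-δ) (2 * δ) from ⟨hl, hu.2.le⟩), abs_le]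
      have ha {x : ℝ} (hx : x ≤ 3 * δ) : a x ≤ 3 * M δ := h.le_three_mul hM haM hδ hx
      have hplus := ha (x := u + τ) (by linarith)
      have hmid := ha (x := u) (by linarith)
      have hminus := ha (x := u - τ) (by linarith)
      unfold secondDiff
      constructor <;> linarith [h.nonneg (u + τ), h.nonneg u, h.nonneg (u - τ)]
  calc ∫ u in depthZone q δ 0, |secondDiff a τ u|
      = ∫ u, (depthZone q δ 0).indicator (fun u => |secondDiff a τ u|) u :=
        (integral_indicator (measurableSet_depthZone q δ 0)).symm
    _ ≤ ∫ u, (Ioc (-δ) (2 * δ)).indicator (fun _ => 12 * M δ) u :=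
        integral_mono_of_nonneg
          (Filter.Eventually.of_forall (indicator_nonneg fun _ _ => abs_nonneg _))
          ((integrable_indicator_iff measurableSet_Ioc).2 (integrableOn_const (by simp)))
          (Filter.Eventually.of_forall hle)
    _ = 36 * δ * M δ := by
        rw [integral_indicator measurableSet_Ioc, setIntegral_const,
          Real.volume_real_Ioc_of_le (by linarith), smul_eq_mul]
        ring

lemma setIntegral_depthZone_le (h : ConcaveProfile a H) (hint : Integrable a) (hM : Monotone M)
    (haM : ∀ u, a u ≤ M u) {q δ τ : ℝ} (hδ : 0 < δ) (hτ : 0 < τ) (hτδ : τ ≤ δ / 4)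
    (hH : 4 * q ≤ H) (n : ℕ) :
    ∫ u in depthZone q δ n, |secondDiff a τ u| ≤ 36 * (δ / 2 ^ n) * M (2 ^ n * δ) := by
  rcases eq_or_ne n 0 with rfl | hn
  · simpa using h.setIntegral_depthZone_zero_le hM haM hδ hτ.le (by linarith) q
  have h2n : (2 : ℝ) ≤ 2 ^ n := by
    simpa using pow_le_pow_right₀ one_le_two (Nat.one_le_iff_ne_zero.2 hn)
  set v := 2 ^ n * δ with hv
  have hv2 : 2 * δ ≤ v := by rw [hv]; gcongr
  have hMv : 0 ≤ M v := (h.nonneg v).trans (haM v)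
  rw [depthZone_of_ne_zero q δ hn, ← hv]
  rcases le_or_gt q v with hqv | hqv
  · rw [Ico_eq_empty (by rw [not_lt]; exact (min_le_left _ _).trans hqv), setIntegral_empty]
    positivity
  set z := min q (2 * v)
  have hzq : z ≤ q := min_le_left _ _
  have hzv : z ≤ 2 * v := min_le_right _ _
  have ha {x : ℝ} (hx : x ≤ 3 * v) : a x ≤ 3 * M v := h.le_three_mul hM haM (by linarith) hx
  have hfirst : ∀ y ∈ Icc (v - τ) z, |a (y + τ) - a y| ≤ τ * (3 * M v) / (v / 2) := fun y hy =>
    h.abs_sub_le hτ.le (by linarith) (by linarith [hy.1]) (by linarith [hy.2])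
      (ha (by linarith [hy.2])) (ha (by linarith [hy.2]))
  have hτδ2 : τ ^ 2 ≤ δ ^ 2 := by gcongr; linarith
  calc ∫ u in Ico v z, |secondDiff a τ u| = ∫ u in Ioc v z, |secondDiff a τ u| :=
        integral_Ico_eq_integral_Ioc
    _ ≤ 2 * τ * (τ * (3 * M v) / (v / 2)) :=
        setIntegral_abs_secondDiff_le hint h.concaveOn hτ.le (le_min hqv.le (by linarith))
          (fun y hy => ⟨by linarith [hy.1], by linarith [hy.2]⟩) hfirst
    _ = 12 * τ ^ 2 * M v / v := by ring
    _ ≤ 36 * δ ^ 2 * M v / v := by gcongr; linarith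
    _ = 36 * (δ / 2 ^ n) * M v := by rw [hv]; field_simp

lemma setIntegral_Icc_le (h : ConcaveProfile a H) (hint : Integrable a) {q τ V : ℝ} (hτ : 0 < τ)
    (hτq : τ ≤ q / 2) (hH : 4 * q ≤ H) (hV : ∀ u, a u ≤ V) :
    ∫ u in Icc q (H - q), |secondDiff a τ u| ≤ 4 * τ ^ 2 * V / q := by
  rw [integral_Icc_eq_integral_Ioc]
  calc ∫ u in Ioc q (H - q), |secondDiff a τ u| ≤ 2 * τ * (τ * V / (q / 2)) :=
        setIntegral_abs_secondDiff_le hint h.concaveOn hτ.le (by linarith)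
          (fun y hy => ⟨by linarith [hy.1], by linarith [hy.2]⟩) fun y hy =>
          h.abs_sub_le hτ.le (by linarith) (by linarith [hy.1]) (by linarith [hy.2]) (hV _) (hV _)
    _ = 4 * τ ^ 2 * V / q := by ring

end ConcaveProfile

end SecondDifferences

/-! ### The mean square of a sum of oscillatory integrals -/

section

open scoped FourierTransform ContDiff

/-- The inverse Fourier transform `ξ ↦ ∫ G(s) e(sξ) ds` of a real valued amplitude on the line,
where `e(x) = exp(2πix)`. -/
def realFourierInv (G : ℝ → ℝ) (ξ : ℝ) : ℂ := 𝓕⁻ (fun s => (G s : ℂ)) ξ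

lemma realFourierInv_eq (G : ℝ → ℝ) (ξ : ℝ) :
    realFourierInv G ξ = ∫ s, (G s : ℂ) * 𝐞 (s * ξ) := by
  simp only [realFourierInv, Real.fourierInv_eq_fourier_neg, Real.fourier_real_eq,
    Circle.smul_def, smul_eq_mul, mul_neg, neg_neg, mul_comm]

lemma continuous_coe_fourierChar : Continuous fun x => (𝐞 x : ℂ) :=
  continuous_subtype_val.comp Real.continuous_fourierChar

lemma conj_fourierChar (x : ℝ) : (starRingEnd ℂ) (𝐞 x : ℂ) = 𝐞 (-x) := by
  rw [AddChar.map_neg_eq_inv, Circle.coe_inv_eq_conj]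

lemma fourierChar_add (x y : ℝ) : (𝐞 (x + y) : ℂ) = 𝐞 x * 𝐞 y := by
  rw [AddChar.map_add_eq_mul, Circle.coe_mul]

lemma integrable_mul_fourierChar {G : ℝ → ℝ} (hG : Integrable G) (ξ : ℝ) :
    Integrable fun s => (G s : ℂ) * 𝐞 (s * ξ) :=
  hG.ofReal.mul_bdd (c := 1) (continuous_coe_fourierChar.comp (by fun_prop)).aestronglyMeasurable
    (.of_forall fun _ => (Circle.norm_coe _).le)

lemma norm_realFourierInv_le (G : ℝ → ℝ) (ξ : ℝ) : ‖realFourierInv G ξ‖ ≤ ∫ s, |G s| := by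
  rw [realFourierInv_eq]
  refine (norm_integral_le_integral_norm _).trans_eq ?_
  simp only [norm_mul, Complex.norm_real, Real.norm_eq_abs, Circle.norm_coe, mul_one]

lemma continuous_realFourierInv {G : ℝ → ℝ} (hG : Integrable G) : Continuous (realFourierInv G) :=
  VectorFourier.fourierIntegral_continuous Real.continuous_fourierChar
    (L := -innerₗ ℝ) (continuous_inner (𝕜 := ℝ) (E := ℝ)).neg hG.ofReal

lemma realFourierInv_zero (G : ℝ → ℝ) : realFourierInv G 0 = ((∫ s, G s : ℝ) : ℂ) := by
  rw [realFourierInv_eq, ← integral_complex_ofReal]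
  simp only [mul_zero, AddChar.map_zero_eq_one, Circle.coe_one, mul_one]

lemma realFourierInv_add {G G' : ℝ → ℝ} (hG : Integrable G) (hG' : Integrable G') (ξ : ℝ) :
    realFourierInv (G + G') ξ = realFourierInv G ξ + realFourierInv G' ξ := by
  simp only [realFourierInv_eq, Pi.add_apply, Complex.ofReal_add, add_mul]
  exact integral_add (integrable_mul_fourierChar hG ξ) (integrable_mul_fourierChar hG' ξ)

lemma realFourierInv_const_mul (a : ℝ) (G : ℝ → ℝ) (ξ : ℝ) :
    realFourierInv (fun s => a * G s) ξ = a * realFourierInv G ξ := by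
  simp only [realFourierInv_eq, Complex.ofReal_mul, mul_assoc]
  exact integral_const_mul _ _

lemma conj_realFourierInv (G : ℝ → ℝ) (ξ : ℝ) :
    (starRingEnd ℂ) (realFourierInv G ξ) = realFourierInv G (-ξ) := by
  simp only [realFourierInv_eq, ← integral_conj, map_mul, Complex.conj_ofReal, conj_fourierChar,
    mul_neg]

lemma realFourierInv_comp_neg (G : ℝ → ℝ) (ξ : ℝ) :
    realFourierInv (fun s => G (-s)) ξ = realFourierInv G (-ξ) := by
  rw [realFourierInv_eq, realFourierInv_eq,
    ← integral_neg_eq_self fun s => (G s : ℂ) * 𝐞 (s * -ξ)]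
  simp only [neg_mul_neg]

lemma realFourierInv_comp_sub_div (G : ℝ → ℝ) (r : ℝ) {h : ℝ} (hh : 0 < h) (ξ : ℝ) :
    realFourierInv (fun s => G ((s - r) / h)) ξ = h * 𝐞 (r * ξ) * realFourierInv G (h * ξ) := by
  rw [realFourierInv_eq, realFourierInv_eq,
    ← integral_add_right_eq_self (fun s => (G ((s - r) / h) : ℂ) * 𝐞 (s * ξ)) r,
    mul_assoc, ← integral_const_mul, ← Complex.real_smul, ← abs_of_pos hh,
    ← Measure.integral_comp_div _ h, abs_of_pos hh]
  refine integral_congr_ae (.of_forall fun s => ?_)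
  simp only [add_sub_cancel_right, add_mul, fourierChar_add]
  rw [show s / h * (h * ξ) = s * ξ by field_simp]
  ring

lemma exists_norm_realFourierInv_le {φ : ℝ → ℝ} (hsupp : HasCompactSupport φ)
    (hφ : ContDiff ℝ ∞ φ) (N : ℕ) :
    ∃ C : ℝ, 0 < C ∧ ∀ ξ : ℝ, ‖realFourierInv φ ξ‖ ≤ C * ((1 + |ξ|) ^ N)⁻¹ := by
  let f : SchwartzMap ℝ ℂ := (hsupp.comp_left Complex.ofReal_zero).toSchwartzMap
    (Complex.ofRealCLM.contDiff.comp hφ)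
  let C := 2 ^ N * (Finset.Iic ((N, 0) : ℕ × ℕ)).sup
    (fun m => SchwartzMap.seminorm ℝ m.1 m.2) (𝓕⁻ f)
  have hC : ∀ ξ : ℝ, (1 + |ξ|) ^ N * ‖realFourierInv φ ξ‖ ≤ C := fun ξ => by
    have := SchwartzMap.one_add_le_sup_seminorm_apply (𝕜 := ℝ) (m := (N, 0)) le_rfl le_rfl
      (𝓕⁻ f) ξ
    rwa [norm_iteratedFDeriv_zero, SchwartzMap.fourierInv_coe] at this
  have hC0 : 0 ≤ C := le_trans (by positivity) (hC 0)
  refine ⟨C + 1, by linarith, fun ξ => ?_⟩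
  rw [← div_eq_mul_inv, le_div_iff₀ (by positivity), mul_comm]
  linarith [hC ξ]

/-- Fubini: integrating out the time first produces the transform of the cutoff `φ` at the
difference of the two frequencies. -/
lemma integral_mul_realFourierInv_mul_conj {φ G G' : ℝ → ℝ} (hφ : Integrable φ)
    (hG : Integrable G) (hG' : Integrable G') (κ κ' : ℝ) :
    ∫ t, (φ t : ℂ) *
        (realFourierInv G (κ * t) * (starRingEnd ℂ) (realFourierInv G' (κ' * t))) =
      ∫ p : ℝ × ℝ, ((G p.1 : ℂ) * G' p.2) * realFourierInv φ (κ * p.1 - κ' * p.2) := by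
  let Φ : ℝ → ℝ × ℝ → ℂ := fun t p =>
    (φ t : ℂ) * (((G p.1 : ℂ) * G' p.2) * 𝐞 (t * (κ * p.1 - κ' * p.2)))
  have hΦ : Integrable (Function.uncurry Φ) (volume.prod (volume.prod volume)) := by
    have hprod : Integrable (fun z : ℝ × ℝ × ℝ => (φ z.1 : ℂ) * ((G z.2.1 : ℂ) * G' z.2.2))
        (volume.prod (volume.prod volume)) := hφ.ofReal.mul_prod (hG.ofReal.mul_prod hG'.ofReal)
    refine (hprod.mul_bdd (g := fun z => (𝐞 (z.1 * (κ * z.2.1 - κ' * z.2.2)) : ℂ)) (c := 1)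
      (continuous_coe_fourierChar.comp (by fun_prop)).aestronglyMeasurable
      (.of_forall fun _ => (Circle.norm_coe _).le)).congr (.of_forall fun z => ?_)
    simp only [Φ, Function.uncurry, mul_assoc]
  have time_slice (t : ℝ) : (φ t : ℂ) * (realFourierInv G (κ * t) *
      (starRingEnd ℂ) (realFourierInv G' (κ' * t))) = ∫ p, Φ t p := by
    rw [conj_realFourierInv, realFourierInv_eq, realFourierInv_eq, ← integral_prod_mul,
      ← integral_const_mul]
    refine integral_congr_ae (.of_forall fun p => ?_)
    simp only [Φ]
    rw [show t * (κ * p.1 - κ' * p.2) = p.1 * (κ * t) + p.2 * -(κ' * t) by ring, fourierChar_add]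
    ring
  have frequency_slice (p : ℝ × ℝ) : ∫ t, Φ t p =
      ((G p.1 : ℂ) * G' p.2) * realFourierInv φ (κ * p.1 - κ' * p.2) := by
    rw [realFourierInv_eq, ← integral_const_mul]
    exact integral_congr_ae (.of_forall fun t => by ring)
  calc _ = ∫ t, ∫ p, Φ t p := integral_congr_ae (.of_forall time_slice)
    _ = ∫ p, ∫ t, Φ t p := integral_integral_swap hΦ
    _ = _ := integral_congr_ae (.of_forall frequency_slice)

lemma norm_integral_mul_realFourierInv_mul_conj_le {φ G G' : ℝ → ℝ} (hφ : Integrable φ)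
    (hG : Integrable G) (hG' : Integrable G') {κ κ' W : ℝ}
    (hW : ∀ s s', G s ≠ 0 → G' s' ≠ 0 → ‖realFourierInv φ (κ * s - κ' * s')‖ ≤ W) :
    ‖∫ t, (φ t : ℂ) *
        (realFourierInv G (κ * t) * (starRingEnd ℂ) (realFourierInv G' (κ' * t)))‖ ≤
      (∫ s, |G s|) * (∫ s, |G' s|) * W := by
  rw [integral_mul_realFourierInv_mul_conj hφ hG hG', ← integral_prod_mul, ← integral_mul_const]
  refine norm_integral_le_of_norm_le ((hG.abs.mul_prod hG'.abs).mul_const W)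
    (.of_forall fun p => ?_)
  rw [norm_mul, norm_mul, Complex.norm_real, Complex.norm_real, Real.norm_eq_abs,
    Real.norm_eq_abs]
  rcases eq_or_ne (G p.1) 0 with h | h
  · simp [h]
  rcases eq_or_ne (G' p.2) 0 with h' | h'
  · simp [h']
  gcongr
  exact hW _ _ h h'

lemma integral_mul_norm_sum_sq_le {ι : Type*} (K : Finset ι) (c : ι → ℂ) {φ : ℝ → ℝ}
    (hφ : Integrable φ) {G : ι → ℝ → ℝ} (hG : ∀ k, Integrable (G k)) {κ : ι → ℝ}
    {W : ι → ι → ℝ} (hW : ∀ k l s s', G k s ≠ 0 → G l s' ≠ 0 →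
      ‖realFourierInv φ (κ k * s - κ l * s')‖ ≤ W k l) :
    ∫ t, φ t * ‖∑ k ∈ K, c k * realFourierInv (G k) (κ k * t)‖ ^ 2 ≤
      ∑ k ∈ K, ∑ l ∈ K, ‖c k‖ * ‖c l‖ * ((∫ s, |G k s|) * (∫ s, |G l s|) * W k l) := by
  let pair (k l : ι) (t : ℝ) : ℂ := (φ t : ℂ) * (realFourierInv (G k) (κ k * t) *
    (starRingEnd ℂ) (realFourierInv (G l) (κ l * t)))
  have hcont (k : ι) : Continuous fun t => realFourierInv (G k) (κ k * t) :=
    (continuous_realFourierInv (hG k)).comp (continuous_const_mul _)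
  have hpair (k l : ι) : Integrable fun t => c k * (starRingEnd ℂ) (c l) * pair k l t := by
    refine (hφ.ofReal.mul_bdd (c := (∫ s, |G k s|) * ∫ s, |G l s|)
      ((hcont k).mul (Complex.continuous_conj.comp (hcont l))).aestronglyMeasurable
      (.of_forall fun t => ?_)).const_mul _
    refine (norm_mul_le _ _).trans ?_
    rw [Function.comp_apply, RCLike.norm_conj]
    gcongr <;> exact norm_realFourierInv_le _ _
  have expand (t : ℝ) :
      ((φ t * ‖∑ k ∈ K, c k * realFourierInv (G k) (κ k * t)‖ ^ 2 : ℝ) : ℂ) =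
        ∑ k ∈ K, ∑ l ∈ K, c k * (starRingEnd ℂ) (c l) * pair k l t := by
    rw [Complex.ofReal_mul, Complex.ofReal_pow, ← Complex.mul_conj']
    rw [map_sum, Finset.sum_mul_sum, Finset.mul_sum]
    refine Finset.sum_congr rfl fun k _ => ?_
    rw [Finset.mul_sum]
    refine Finset.sum_congr rfl fun l _ => ?_
    simp only [pair, map_mul]
    ring
  refine (Real.le_norm_self _).trans ?_
  rw [← Complex.norm_real, ← integral_complex_ofReal]
  simp_rw [expand]
  rw [integral_finsetSum _ fun k _ => integrable_finsetSum _ fun l _ => hpair k l]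
  refine norm_sum_le_of_le _ fun k _ => ?_
  rw [integral_finsetSum _ fun l _ => hpair k l]
  refine norm_sum_le_of_le _ fun l _ => ?_
  rw [integral_const_mul, norm_mul, norm_mul, RCLike.norm_conj]
  gcongr
  exact norm_integral_mul_realFourierInv_mul_conj_le hφ (hG k) (hG l) (hW k l)

/-- Decay in `x` at scale `1/h` is decay in `ρ` at the coarser scale `1/B`, as long as `x` and `ρ`
differ by `O(1/B)`. -/
lemma inv_one_add_pow_le_of_mul_abs_sub_le (N : ℕ) {h B x ρ : ℝ} (hB : 0 ≤ B) (hBh : B ≤ h)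
    (hx : B * |x - ρ| ≤ 4) :
    ((1 + |h * x|) ^ N)⁻¹ ≤ 5 ^ N * (1 + B * |ρ|) ^ (-(N : ℝ)) := by
  rw [Real.rpow_neg (by positivity), Real.rpow_natCast, ← div_eq_mul_inv,
    inv_le_comm₀ (by positivity) (by positivity), inv_div, ← div_pow]
  gcongr
  rw [div_le_iff₀ (by norm_num), abs_mul, abs_of_nonneg (hB.trans hBh)]
  have hρ : B * |ρ| ≤ B * |x| + B * |x - ρ| := by
    rw [← mul_add, abs_sub_comm]
    gcongr
    linarith [abs_sub_abs_le_abs_sub ρ x]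
  have hBx : B * |x| ≤ h * |x| := by gcongr
  linarith [mul_nonneg hB (abs_nonneg x)]

lemma intervalIntegral_le_integral_bump_mul {F : ℝ → ℝ} (hF : Continuous F) (hF0 : 0 ≤ F)
    (b : ContDiffBump (1 / 2 : ℝ)) (hb : b.rIn = 1) {R h T₀ T₁ : ℝ} (hh : 0 < h)
    (hT₀ : R - h / 2 ≤ T₀) (hT₁ : T₁ ≤ R + 3 * h / 2) (hT : T₀ ≤ T₁) :
    ∫ t in T₀..T₁, F t ≤ ∫ t, b ((t - R) / h) * F t := by
  let e : ℝ ≃ₜ ℝ := (Homeomorph.subRight R).trans (Homeomorph.mulRight₀ h⁻¹ (inv_ne_zero hh.ne'))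
  have hsupp : HasCompactSupport fun t => b ((t - R) / h) := by
    simp only [div_eq_mul_inv]
    exact b.hasCompactSupport.comp_homeomorph e
  have hint : Integrable fun t => b ((t - R) / h) * F t :=
    ((b.continuous.comp (by fun_prop)).mul hF).integrable_of_hasCompactSupport hsupp.mul_right
  rw [intervalIntegral.integral_of_le hT, ← integral_indicator measurableSet_Ioc]
  refine integral_mono_of_nonneg (.of_forall fun t => indicator_nonneg (fun _ _ => hF0 _) _) hint
    (.of_forall fun t => ?_)
  refine indicator_apply_le' (fun ht => ?_) fun _ => mul_nonneg b.nonneg (hF0 t)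
  beta_reduce
  rw [b.one_of_mem_closedBall, one_mul]
  rw [Metric.mem_closedBall, Real.dist_eq, hb, abs_le,
    show (t - R) / h - 1 / 2 = (t - R - h / 2) / h by field_simp, le_div_iff₀ hh, div_le_iff₀ hh]
  constructor <;> linarith [ht.1, ht.2]

lemma norm_realFourierInv_comp_sub_div_sub_le {φ : ℝ → ℝ} {N : ℕ} {C h A B x x' ρ ρ' : ℝ}
    (hφ : ∀ ξ, ‖realFourierInv φ ξ‖ ≤ C * ((1 + |ξ|) ^ N)⁻¹) (hC : 0 ≤ C) (hh : 0 < h)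
    (hB : 0 ≤ B) (hBh : B ≤ h) (hAB : A * B ≤ 2) (hx : |x - ρ| ≤ A) (hx' : |x' - ρ'| ≤ A) (R : ℝ) :
    ‖realFourierInv (fun t => φ ((t - R) / h)) (x - x')‖
      ≤ h * (C * (5 ^ N * (1 + B * |ρ - ρ'|) ^ (-(N : ℝ)))) := by
  have hdist : |x - x' - (ρ - ρ')| ≤ 2 * A := by
    rw [sub_sub_sub_comm, two_mul]
    exact (abs_sub _ _).trans (add_le_add hx hx')
  rw [realFourierInv_comp_sub_div _ _ hh, norm_mul, norm_mul, Complex.norm_real,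
    Real.norm_of_nonneg hh.le, Circle.norm_coe, mul_one]
  gcongr
  refine (hφ _).trans ?_
  gcongr
  exact inv_one_add_pow_le_of_mul_abs_sub_le N hB hBh (by nlinarith)

/-- The time cutoff makes two summands almost orthogonal unless their frequencies, which are
localized near `ρ k` and `ρ l`, are within `1/B` of each other. -/
lemma exists_meanSquare_sum_realFourierInv_le (N : ℕ) : ∃ C : ℝ, 0 < C ∧ ∀ {ι : Type*}
    (K : Finset ι) (c : ι → ℂ) {G : ι → ℝ → ℝ} {κ ρ : ι → ℝ} {R h A B T₀ T₁ : ℝ},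
    0 < h → 0 ≤ B → B ≤ h → A * B ≤ 2 → (∀ k, Integrable (G k)) →
    (∀ k s, G k s ≠ 0 → |κ k * s - ρ k| ≤ A) →
    R - h / 2 ≤ T₀ → T₁ ≤ R + 3 * h / 2 → T₀ ≤ T₁ →
    (1 / h) * ∫ t in T₀..T₁, ‖∑ k ∈ K, c k * realFourierInv (G k) (κ k * t)‖ ^ 2 ≤
      C * ∑ k ∈ K, ∑ l ∈ K, ‖c k‖ * ‖c l‖ * ((∫ s, |G k s|) * (∫ s, |G l s|) *
        (1 + B * |ρ k - ρ l|) ^ (-(N : ℝ))) := by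
  let b : ContDiffBump (1 / 2 : ℝ) := ⟨1, 2, by norm_num, by norm_num⟩
  obtain ⟨C, hC, hdecay⟩ := exists_norm_realFourierInv_le b.hasCompactSupport b.contDiff N
  refine ⟨C * 5 ^ N, by positivity, ?_⟩
  intro ι K c G κ ρ R h A B T₀ T₁ hh hB hBh hAB hG hloc hT₀ hT₁ hT
  have hφ : Integrable fun t => b ((t - R) / h) :=
    ((b.continuous.integrable_of_hasCompactSupport b.hasCompactSupport).comp_div
      hh.ne').comp_sub_right R
  have hW (k l : ι) (s s' : ℝ) (hs : G k s ≠ 0) (hs' : G l s' ≠ 0) :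
      ‖realFourierInv (fun t => b ((t - R) / h)) (κ k * s - κ l * s')‖ ≤
        h * (C * (5 ^ N * (1 + B * |ρ k - ρ l|) ^ (-(N : ℝ)))) :=
    norm_realFourierInv_comp_sub_div_sub_le hdecay hC.le hh hB hBh hAB (hloc k s hs)
      (hloc l s' hs') R
  have hcont : Continuous fun t => ‖∑ k ∈ K, c k * realFourierInv (G k) (κ k * t)‖ ^ 2 :=
    (continuous_finsetSum _ fun k _ => continuous_const.mul
      ((continuous_realFourierInv (hG k)).comp (continuous_const_mul _))).norm.pow 2
  calc _ ≤ 1 / h * ∑ k ∈ K, ∑ l ∈ K, ‖c k‖ * ‖c l‖ * ((∫ s, |G k s|) * (∫ s, |G l s|) *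
          (h * (C * (5 ^ N * (1 + B * |ρ k - ρ l|) ^ (-(N : ℝ)))))) := by
        gcongr
        exact (intervalIntegral_le_integral_bump_mul hcont (fun _ => sq_nonneg _) b rfl hh hT₀ hT₁
          hT).trans (integral_mul_norm_sum_sq_le K c hφ hG hW)
    _ = _ := by
        simp only [Finset.mul_sum]
        refine Finset.sum_congr rfl fun k _ => Finset.sum_congr rfl fun l _ => ?_
        field_simp

end

/-! ### Periodized mollifiers -/

section

open scoped FourierTransform ContDiff

/-- A nonnegative mollifier `f` of mass one supported in the ball of radius `r`, its periodization
`P` along the lattice `e`, and the Fourier coefficients `c` of `P`. -/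
structure PeriodizedMollifier {E ι : Type*} [NormedAddCommGroup E] [InnerProductSpace ℝ E]
    [MeasureSpace E] [AddGroup ι] (e : ι → E) (r : ℝ) (f P : E → ℝ) (c : ι → ℂ) : Prop where
  nonneg : ∀ x, 0 ≤ f x
  norm_lt : ∀ x, f x ≠ 0 → ‖x‖ < r
  integral_eq_one : ∫ x, f x = 1
  coeff_zero : c 0 = 1
  coeff_neg : ∀ m, c (-m) = (starRingEnd ℂ) (c m)
  summable_coeff : Summable fun m => ‖c m‖
  hasSum_translate : ∀ x, HasSum (fun m => f (x - e m)) (P x)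
  hasSum_fourier : ∀ x, HasSum (fun m => c m * 𝐞 ⟪x, e m⟫) (P x : ℂ)

lemma summable_inv_one_add_abs_div_pow {R : ℝ} (hR : 0 < R) {M : ℕ} (hM : 2 ≤ M) :
    Summable fun j : ℤ => ((1 + |(j : ℝ)| / R) ^ M)⁻¹ := by
  refine ((Real.summable_one_div_int_pow.2 one_lt_two).mul_left (R ^ 2)).of_norm_bounded_eventually
    ((finite_singleton 0).eventually_cofinite_notMem.mono fun j hj => ?_)
  have hj : 0 < |(j : ℝ)| := abs_pos.2 (Int.cast_ne_zero.2 hj)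
  rw [norm_inv, Real.norm_of_nonneg (by positivity), ← sq_abs (j : ℝ), mul_one_div, ← div_pow,
    ← inv_div |(j : ℝ)| R, inv_pow]
  refine inv_anti₀ (by positivity) ?_
  calc (|(j : ℝ)| / R) ^ 2 ≤ (1 + |(j : ℝ)| / R) ^ 2 := by gcongr; linarith
    _ ≤ (1 + |(j : ℝ)| / R) ^ M := pow_le_pow_right₀ (by linarith [div_pos hj hR]) hM

lemma summable_comp_sub_intCast {f : ℝ → ℝ} (hf : HasCompactSupport f) (x : ℝ) :
    Summable fun j : ℤ => f (x - j) := by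
  have hcompact : IsCompact ((fun j : ℤ => x - j) ⁻¹' tsupport f) :=
    ((Homeomorph.subLeft x).isClosedEmbedding.comp
      Int.isClosedEmbedding_coe_real).isCompact_preimage hf
  exact summable_of_hasFiniteSupport
    (hcompact.finite_of_discrete.subset fun j hj => subset_tsupport f hj)

/-- Poisson summation. -/
lemma hasSum_realFourierInv_mul_fourierChar {f : ℝ → ℝ} (hsupp : HasCompactSupport f)
    (hf : ContDiff ℝ ∞ f) (x : ℝ) :
    HasSum (fun j : ℤ => realFourierInv f (-j) * 𝐞 (j * x)) ((∑' j : ℤ, f (x - j) : ℝ) : ℂ) := by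
  let F : SchwartzMap ℝ ℂ := (hsupp.comp_left Complex.ofReal_zero).toSchwartzMap
    (Complex.ofRealCLM.contDiff.comp hf)
  obtain ⟨C, -, hC⟩ := exists_norm_realFourierInv_le hsupp hf 2
  have hsummable : Summable fun j : ℤ => realFourierInv f (-j) * 𝐞 (j * x) := by
    refine .of_norm_bounded
      ((summable_inv_one_add_abs_div_pow one_pos le_rfl).mul_left C) fun j => ?_
    simpa only [norm_mul, Circle.norm_coe, mul_one, abs_neg, div_one] using hC (-j)
  have translates : ∑' j : ℤ, F (x + j) = ((∑' j : ℤ, f (x - j) : ℝ) : ℂ) := by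
    rw [← (Equiv.neg ℤ).tsum_eq, Complex.ofReal_tsum]
    refine tsum_congr fun j => ?_
    rw [Equiv.neg_apply, Int.cast_neg, ← sub_eq_add_neg]
    rfl
  rw [← translates, F.tsum_eq_tsum_fourier x]
  convert hsummable.hasSum using 3 with j
  rw [fourier_coe_apply, Real.fourierChar_apply, SchwartzMap.fourier_coe, realFourierInv,
    Real.fourierInv_eq_fourier_neg, neg_neg]
  congr 2
  push_cast
  ring

lemma exists_periodizedMollifier_int {ε : ℝ} (hε : 0 < ε) {M : ℕ} (hM : 2 ≤ M) :
    ∃ C : ℝ, 0 < C ∧ ∀ R : ℝ, 0 < R → ∃ (f P : ℝ → ℝ) (c : ℤ → ℂ),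
      PeriodizedMollifier ((↑) : ℤ → ℝ) (ε / R) f P c ∧
      ∀ j, ‖c j‖ ≤ C * ((1 + |(j : ℝ)| / R) ^ M)⁻¹ := by
  let b : ContDiffBump (0 : ℝ) := ⟨ε / 2, ε, by linarith, by linarith⟩
  let φ := b.normed volume
  obtain ⟨C, hC, hdecay⟩ := exists_norm_realFourierInv_le (φ := φ)
    b.hasCompactSupport_normed b.contDiff_normed M
  refine ⟨C, hC, fun R hR => ?_⟩
  let f (x : ℝ) : ℝ := R * φ ((x - 0) / R⁻¹)
  have hfsmooth : ContDiff ℝ ∞ f := contDiff_const.mul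
    ((b.contDiff_normed (n := ⊤)).comp ((contDiff_id.sub contDiff_const).div_const _))
  have hfnorm (x : ℝ) (hx : f x ≠ 0) : ‖x‖ < ε / R := by
    have hmem : (x - 0) / R⁻¹ ∈ Function.support φ := right_ne_zero_of_mul hx
    rwa [b.support_normed_eq, mem_ball_zero_iff, sub_zero, div_inv_eq_mul, norm_mul,
      Real.norm_of_nonneg hR.le, ← lt_div_iff₀ hR] at hmem
  have hfsupp : HasCompactSupport f :=
    .of_support_subset_isCompact (isCompact_closedBall 0 (ε / R)) fun x hx =>
      mem_closedBall_zero_iff.2 (hfnorm x hx).le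
  have htransform (ξ : ℝ) : realFourierInv f ξ = realFourierInv φ (ξ / R) := by
    rw [realFourierInv_const_mul, realFourierInv_comp_sub_div _ _ (inv_pos.2 hR), zero_mul,
      AddChar.map_zero_eq_one, Circle.coe_one, mul_one, ← mul_assoc, ← Complex.ofReal_mul,
      mul_inv_cancel₀ hR.ne', Complex.ofReal_one, one_mul, inv_mul_eq_div]
  have hcoeff (j : ℤ) : ‖realFourierInv f (-j)‖ ≤ C * ((1 + |(j : ℝ)| / R) ^ M)⁻¹ := by
    simpa only [htransform, abs_div, abs_neg, abs_of_pos hR] using hdecay (-j / R)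
  have hmass : ((∫ x, f x : ℝ) : ℂ) = 1 := by
    rw [← realFourierInv_zero, htransform, zero_div, realFourierInv_zero, b.integral_normed,
      Complex.ofReal_one]
  refine ⟨f, fun x => ∑' j : ℤ, f (x - j), fun j => realFourierInv f (-j), ?_, hcoeff⟩
  exact
    { nonneg := fun x => mul_nonneg hR.le (b.nonneg_normed _)
      norm_lt := hfnorm
      integral_eq_one := by exact_mod_cast hmass
      coeff_zero := by rw [Int.cast_zero, neg_zero, realFourierInv_zero, hmass]
      coeff_neg := fun j => by rw [conj_realFourierInv, Int.cast_neg]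
      summable_coeff := .of_nonneg_of_le (fun _ => norm_nonneg _) hcoeff
        ((summable_inv_one_add_abs_div_pow hR hM).mul_left C)
      hasSum_translate := fun x => (summable_comp_sub_intCast hfsupp x).hasSum
      hasSum_fourier := hasSum_realFourierInv_mul_fourierChar hfsupp hfsmooth }

lemma ek_apply (m : Fin 2 → ℤ) (i : Fin 2) : ek m i = m i := rfl

lemma ek_zero : ek 0 = 0 := by
  ext i
  simp [ek_apply]

lemma norm_ek_sq (m : Fin 2 → ℤ) : ‖ek m‖ ^ 2 = (m 0 : ℝ) ^ 2 + (m 1 : ℝ) ^ 2 := by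
  simp [norm_sq_eq_sum_coords, ek_apply]

lemma inner_ek (y : E2) (m : Fin 2 → ℤ) : ⟪y, ek m⟫ = m 0 * y 0 + m 1 * y 1 := by
  simp [inner_eq_sum_coords, ek_apply, mul_comm]

lemma norm_ek_le (m : Fin 2 → ℤ) : ‖ek m‖ ≤ |(m 0 : ℝ)| + |(m 1 : ℝ)| := by
  refine le_of_sq_le_sq ?_ (by positivity)
  rw [norm_ek_sq, ← sq_abs (m 0 : ℝ), ← sq_abs (m 1 : ℝ)]
  nlinarith [mul_nonneg (abs_nonneg (m 0 : ℝ)) (abs_nonneg (m 1 : ℝ))]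

lemma measurePreserving_coords :
    MeasurePreserving (fun x : E2 => (x 0, x 1)) volume (volume.prod volume) :=
  (volume_preserving_finTwoArrow ℝ).comp
    (EuclideanSpace.volume_preserving_symm_measurableEquiv_toLp (Fin 2))

lemma integral_coords_mul (f g : ℝ → ℝ) :
    ∫ x : E2, f (x 0) * g (x 1) = (∫ x, f x) * ∫ x, g x := by
  have hemb : MeasurableEmbedding fun x : E2 => (x 0, x 1) :=
    (MeasurableEquiv.finTwoArrow (α := ℝ)).measurableEmbedding.comp
      (MeasurableEquiv.toLp 2 (Fin 2 → ℝ)).symm.measurableEmbedding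
  rw [← integral_prod_mul, ← measurePreserving_coords.integral_comp hemb]

lemma summable_coords_mul {f g : ℤ → ℝ} (hf : Summable f) (hg : Summable g) (hf₀ : 0 ≤ f)
    (hg₀ : 0 ≤ g) : Summable fun m : Fin 2 → ℤ => f (m 0) * g (m 1) :=
  (finTwoArrowEquiv ℤ).summable_iff.2 (hf.mul_of_nonneg hg hf₀ hg₀)

lemma hasSum_coords_mul {R : Type*} [NormedRing R] [CompleteSpace R] {f g : ℤ → R} {a b : R}
    (hf : HasSum f a) (hg : HasSum g b) (hf' : Summable fun j => ‖f j‖)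
    (hg' : Summable fun j => ‖g j‖) : HasSum (fun m : Fin 2 → ℤ => f (m 0) * g (m 1)) (a * b) :=
  (finTwoArrowEquiv ℤ).hasSum_iff.2 (hf.mul hg (summable_mul_of_summable_norm hf' hg'))

lemma PeriodizedMollifier.prod {r : ℝ} {f P : ℝ → ℝ} {c : ℤ → ℂ}
    (h : PeriodizedMollifier ((↑) : ℤ → ℝ) r f P c) :
    PeriodizedMollifier ek (2 * r) (fun x => f (x 0) * f (x 1)) (fun x => P (x 0) * P (x 1))
      fun m => c (m 0) * c (m 1) where
  nonneg x := mul_nonneg (h.nonneg _) (h.nonneg _)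
  norm_lt x hx := by
    have h₀ := h.norm_lt _ (left_ne_zero_of_mul hx)
    have h₁ := h.norm_lt _ (right_ne_zero_of_mul hx)
    rw [Real.norm_eq_abs] at h₀ h₁
    refine lt_of_pow_lt_pow_left₀ 2 (by linarith [abs_nonneg (x 0)]) ?_
    rw [norm_sq_eq_sum_coords, ← sq_abs (x 0), ← sq_abs (x 1)]
    nlinarith [abs_nonneg (x 0), abs_nonneg (x 1)]
  integral_eq_one := by
    rw [integral_coords_mul, h.integral_eq_one, one_mul]
  coeff_zero := by simp only [Pi.zero_apply, h.coeff_zero, one_mul]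
  coeff_neg m := by simp only [Pi.neg_apply, h.coeff_neg, map_mul]
  summable_coeff := by
    simpa only [norm_mul] using summable_coords_mul h.summable_coeff h.summable_coeff
      (fun _ => norm_nonneg _) fun _ => norm_nonneg _
  hasSum_translate x := by
    have hnorm (y : ℝ) : Summable fun j : ℤ => ‖f (y - j)‖ := by
      simpa only [Real.norm_of_nonneg (h.nonneg _)] using (h.hasSum_translate y).summable
    exact (hasSum_coords_mul (h.hasSum_translate (x 0)) (h.hasSum_translate (x 1))
      (hnorm _) (hnorm _)).congr_fun fun m => by simp only [PiLp.sub_apply, ek_apply]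
  hasSum_fourier x := by
    have hnorm (y : ℝ) : Summable fun j : ℤ => ‖c j * 𝐞 ⟪y, (j : ℝ)⟫‖ := by
      simpa only [norm_mul, Circle.norm_coe, mul_one] using h.summable_coeff
    rw [Complex.ofReal_mul]
    refine (hasSum_coords_mul (h.hasSum_fourier (x 0)) (h.hasSum_fourier (x 1))
      (hnorm _) (hnorm _)).congr_fun fun m => ?_
    rw [inner_ek, fourierChar_add, mul_mul_mul_comm]
    rfl

lemma exists_periodizedMollifier_ek {ε : ℝ} (hε : 0 < ε) {M : ℕ} (hM : 2 ≤ M) :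
    ∃ C : ℝ, 0 < C ∧ ∀ R : ℝ, 0 < R → ∃ (f P : E2 → ℝ) (c : (Fin 2 → ℤ) → ℂ),
      PeriodizedMollifier ek (ε / R) f P c ∧ ∀ m, ‖c m‖ ≤ C * ((1 + ‖ek m‖ / R) ^ M)⁻¹ := by
  obtain ⟨C, hC, H⟩ := exists_periodizedMollifier_int (half_pos hε) hM
  refine ⟨C * C, by positivity, fun R hR => ?_⟩
  obtain ⟨f, P, c, h, hdecay⟩ := H R hR
  have hradius : 2 * (ε / 2 / R) = ε / R := by ring
  refine ⟨_, _, _, hradius ▸ h.prod, fun m => ?_⟩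
  have hsubmul : 1 + ‖ek m‖ / R ≤ (1 + |(m 0 : ℝ)| / R) * (1 + |(m 1 : ℝ)| / R) := by
    have hle : ‖ek m‖ / R ≤ |(m 0 : ℝ)| / R + |(m 1 : ℝ)| / R := by
      rw [← add_div]
      gcongr
      exact norm_ek_le m
    have : 0 ≤ |(m 0 : ℝ)| / R * (|(m 1 : ℝ)| / R) := by positivity
    linarith
  calc ‖c (m 0) * c (m 1)‖
      ≤ (C * ((1 + |(m 0 : ℝ)| / R) ^ M)⁻¹) * (C * ((1 + |(m 1 : ℝ)| / R) ^ M)⁻¹) := by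
        rw [norm_mul]
        gcongr <;> exact hdecay _
    _ = C * C * (((1 + |(m 0 : ℝ)| / R) * (1 + |(m 1 : ℝ)| / R)) ^ M)⁻¹ := by
        rw [mul_pow, mul_inv]
        ring
    _ ≤ C * C * ((1 + ‖ek m‖ / R) ^ M)⁻¹ := by gcongr

end

/-! ### Smoothed lattice point counts -/

section

open scoped FourierTransform

variable {Ω : Set E2}

/-- The Fourier integral of the indicator of `Ω`, with the sign convention of `𝓕⁻`. -/
def domainTransform (Ω : Set E2) (ξ : E2) : ℂ := ∫ y in Ω, (𝐞 ⟪y, ξ⟫ : ℂ)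

lemma norm_domainTransform_le (ξ : E2) : ‖domainTransform Ω ξ‖ ≤ volume.real Ω := by
  refine (norm_integral_le_integral_norm _).trans_eq ?_
  simp only [Circle.norm_coe, integral_const, smul_eq_mul, mul_one, measureReal_restrict_apply_univ]

lemma domainTransform_zero : domainTransform Ω 0 = volume.real Ω := by
  simp only [domainTransform, inner_zero_right, AddChar.map_zero_eq_one, Circle.coe_one,
    integral_const, measureReal_restrict_apply_univ, Complex.real_smul, mul_one]

lemma setIntegral_smul_fourierChar_inner {s : ℝ} (hs : 0 < s) (ξ : E2) :
    ∫ y in s • Ω, (𝐞 ⟪y, ξ⟫ : ℂ) = (s : ℂ) ^ 2 * domainTransform Ω (s • ξ) := by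
  have hscale := Measure.setIntegral_comp_smul_of_pos volume (fun y : E2 => (𝐞 ⟪y, ξ⟫ : ℂ)) Ω hs
  simp only [inner_smul_left, finrank_euclideanSpace, Fintype.card_fin, conj_trivial] at hscale
  simp only [domainTransform, inner_smul_right, hscale, Complex.real_smul, Complex.ofReal_inv,
    Complex.ofReal_pow]
  rw [mul_inv_cancel_left₀ (pow_ne_zero 2 (Complex.ofReal_ne_zero.2 hs.ne'))]

lemma abs_coord_le_norm_ek (m : Fin 2 → ℤ) (i : Fin 2) : |(m i : ℝ)| ≤ ‖ek m‖ :=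
  PiLp.norm_apply_le (ek m) i

lemma finite_setOf_norm_ek_le (B : ℝ) : {m : Fin 2 → ℤ | ‖ek m‖ ≤ B}.Finite := by
  refine (Finite.pi fun _ : Fin 2 => finite_Icc (-⌈B⌉) ⌈B⌉).subset fun m hm i _ => ?_
  have hcoord := abs_le.1 (((abs_coord_le_norm_ek m i).trans hm).trans (Int.le_ceil B))
  exact ⟨by exact_mod_cast hcoord.1, by exact_mod_cast hcoord.2⟩

lemma finite_setOf_ek_mem {S : Set E2} (hS : Bornology.IsBounded S) :
    {m : Fin 2 → ℤ | ek m ∈ S}.Finite := by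
  obtain ⟨B, hB⟩ := hS.exists_norm_le
  exact (finite_setOf_norm_ek_le B).subset fun m hm => hB _ hm

lemma latticeCount_eq_sum {S : Set E2} (hS : Bornology.IsBounded S) :
    (latticeCount S : ℝ) = ∑ _m ∈ (finite_setOf_ek_mem hS).toFinset, (1 : ℝ) := by
  rw [latticeCount, Nat.card_coe_set_eq, ncard_eq_toFinset_card _ (finite_setOf_ek_mem hS),
    Finset.sum_const, nsmul_one]

lemma add_mem_add_smul {E : Type*} [NormedAddCommGroup E] [NormedSpace ℝ E] {Ω : Set E}
    {r s δ : ℝ} (hconv : Convex ℝ Ω) (hball : Metric.ball 0 r ⊆ Ω) (hs : 0 ≤ s) (hδ : 0 < δ)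
    {y z : E} (hy : y ∈ s • Ω) (hz : ‖z‖ < r * δ) : y + z ∈ (s + δ) • Ω := by
  rw [hconv.add_smul hs hδ.le]
  refine add_mem_add hy ⟨δ⁻¹ • z, hball ?_, smul_inv_smul₀ hδ.ne' z⟩
  rwa [mem_ball_zero_iff, norm_smul, norm_inv, Real.norm_of_nonneg hδ.le, inv_mul_lt_iff₀' hδ]

namespace PeriodizedMollifier

lemma continuous {E ι : Type*} [NormedAddCommGroup E] [InnerProductSpace ℝ E]
    [MeasureSpace E] [AddGroup ι] {e : ι → E} {r : ℝ} {f P : E → ℝ} {c : ι → ℂ}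
    (h : PeriodizedMollifier e r f P c) : Continuous P := by
  have hseries : Continuous fun x : E => ∑' m, c m * 𝐞 ⟪x, e m⟫ :=
    continuous_tsum (fun m => continuous_const.mul (continuous_coe_fourierChar.comp (by fun_prop)))
      h.summable_coeff fun m x => by rw [norm_mul, Circle.norm_coe, mul_one]
  refine (Complex.continuous_re.comp hseries).congr fun x => ?_
  rw [Function.comp_apply, (h.hasSum_fourier x).tsum_eq, Complex.ofReal_re]

variable {r : ℝ} {f P : E2 → ℝ} {c : (Fin 2 → ℤ) → ℂ}

lemma hasSum_setIntegral (h : PeriodizedMollifier ek r f P c) (hbdd : Bornology.IsBounded Ω)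
    {s : ℝ} (hs : 0 < s) :
    HasSum (fun m => c m * ((s : ℂ) ^ 2 * domainTransform Ω (s • ek m)))
      ((∫ y in s • Ω, P y : ℝ) : ℂ) := by
  have : IsFiniteMeasure (volume.restrict (s • Ω)) :=
    ⟨by simpa using (hbdd.smul₀ s).measure_lt_top (μ := volume)⟩
  have hterm (m : Fin 2 → ℤ) :
      ∫ y in s • Ω, c m * 𝐞 ⟪y, ek m⟫ = c m * ((s : ℂ) ^ 2 * domainTransform Ω (s • ek m)) := by
    rw [integral_const_mul, setIntegral_smul_fourierChar_inner hs]
  have hsum : ∫ y in s • Ω, (∑' m, c m * 𝐞 ⟪y, ek m⟫) = ((∫ y in s • Ω, P y : ℝ) : ℂ) := by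
    rw [← integral_complex_ofReal]
    exact integral_congr_ae (.of_forall fun y => (h.hasSum_fourier y).tsum_eq)
  have hint (m : Fin 2 → ℤ) :
      Integrable (fun y => c m * (𝐞 ⟪y, ek m⟫ : ℂ)) (volume.restrict (s • Ω)) :=
    (Integrable.of_bound (C := 1)
      (continuous_coe_fourierChar.comp (by fun_prop)).aestronglyMeasurable
      (.of_forall fun y => (Circle.norm_coe _).le)).const_mul _
  have key := hasSum_integral_of_summable_integral_norm hint (by
    simp only [norm_mul, Circle.norm_coe, mul_one, integral_const, smul_eq_mul]
    exact h.summable_coeff.mul_left _)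
  rw [hsum] at key
  exact key.congr_fun fun m => (hterm m).symm

lemma hasSum_setIntegral_sub_volume (h : PeriodizedMollifier ek r f P c)
    (hbdd : Bornology.IsBounded Ω) {s : ℝ} (hs : 0 < s) :
    HasSum (fun m => if m = 0 then 0 else c m * ((s : ℂ) ^ 2 * domainTransform Ω (s • ek m)))
      (((∫ y in s • Ω, P y) - s ^ 2 * volume.real Ω : ℝ) : ℂ) := by
  rw [Complex.ofReal_sub]
  refine ((h.hasSum_setIntegral hbdd hs).sub
    (hasSum_ite_eq 0 ((s ^ 2 * volume.real Ω : ℝ) : ℂ))).congr_fun fun m => ?_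
  rcases eq_or_ne m 0 with rfl | hm
  · simp [h.coeff_zero, ek_zero, domainTransform_zero]
  · simp only [hm, if_false, sub_zero]

lemma integral_translate (h : PeriodizedMollifier ek r f P c) (m : Fin 2 → ℤ) :
    ∫ y, f (y - ek m) = 1 := by
  rw [integral_sub_right_eq_self, h.integral_eq_one]

lemma integrable_translate (h : PeriodizedMollifier ek r f P c) (m : Fin 2 → ℤ) :
    Integrable fun y => f (y - ek m) :=
  integrable_of_integral_eq_one (h.integral_translate m)

variable {s δ : ℝ}

lemma setIntegral_le_latticeCount (h : PeriodizedMollifier ek (r * δ) f P c)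
    (hconv : Convex ℝ Ω) (hopen : IsOpen Ω) (hbdd : Bornology.IsBounded Ω)
    (hball : Metric.ball 0 r ⊆ Ω) (hs : 0 ≤ s) (hδ : 0 < δ) :
    ∫ y in s • Ω, P y ≤ latticeCount ((s + δ) • Ω) := by
  let K := (finite_setOf_ek_mem (hbdd.smul₀ (s + δ))).toFinset
  have hP (y : E2) (hy : y ∈ s • Ω) : P y = ∑ m ∈ K, f (y - ek m) := by
    refine (h.hasSum_translate y).unique (hasSum_sum_of_ne_finset_zero fun m hm => ?_)
    contrapose! hm
    have hnorm := h.norm_lt _ hm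
    rw [norm_sub_rev] at hnorm
    simpa [K] using add_mem_add_smul hconv hball hs hδ hy hnorm
  calc ∫ y in s • Ω, P y = ∫ y in s • Ω, ∑ m ∈ K, f (y - ek m) :=
        setIntegral_congr_fun (hopen.measurableSet.const_smul₀ s) hP
    _ = ∑ m ∈ K, ∫ y in s • Ω, f (y - ek m) :=
        integral_finsetSum _ fun m _ => (h.integrable_translate m).integrableOn
    _ ≤ ∑ _m ∈ K, 1 := Finset.sum_le_sum fun m _ =>
        (setIntegral_le_integral (h.integrable_translate m)
          (.of_forall fun y => h.nonneg _)).trans_eq (h.integral_translate m)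
    _ = latticeCount ((s + δ) • Ω) := (latticeCount_eq_sum (hbdd.smul₀ _)).symm

lemma latticeCount_le_setIntegral (h : PeriodizedMollifier ek (r * δ) f P c)
    (hconv : Convex ℝ Ω) (hopen : IsOpen Ω) (hbdd : Bornology.IsBounded Ω)
    (hball : Metric.ball 0 r ⊆ Ω) (hs : 0 ≤ s) (hδ : 0 < δ) :
    latticeCount (s • Ω) ≤ ∫ y in (s + δ) • Ω, P y := by
  let K := (finite_setOf_ek_mem (hbdd.smul₀ s)).toFinset
  have hmass (m : Fin 2 → ℤ) (hm : m ∈ K) : 1 = ∫ y in (s + δ) • Ω, f (y - ek m) := by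
    refine ((setIntegral_eq_integral_of_forall_compl_eq_zero fun y hy => ?_).trans
      (h.integral_translate m)).symm
    contrapose! hy
    have hm : ek m ∈ s • Ω := by simpa [K] using hm
    simpa using add_mem_add_smul hconv hball hs hδ hm (h.norm_lt _ hy)
  have hint (m : Fin 2 → ℤ) (_ : m ∈ K) : IntegrableOn (fun y => f (y - ek m)) ((s + δ) • Ω) :=
    (h.integrable_translate m).integrableOn
  have hPint : IntegrableOn P ((s + δ) • Ω) :=
    (h.continuous.continuousOn.integrableOn_compact
      (hbdd.smul₀ (s + δ)).isCompact_closure).mono_set subset_closure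
  calc (latticeCount (s • Ω) : ℝ) = ∑ _m ∈ K, 1 := latticeCount_eq_sum (hbdd.smul₀ s)
    _ = ∑ m ∈ K, ∫ y in (s + δ) • Ω, f (y - ek m) := Finset.sum_congr rfl hmass
    _ = ∫ y in (s + δ) • Ω, ∑ m ∈ K, f (y - ek m) := (integral_finsetSum _ hint).symm
    _ ≤ ∫ y in (s + δ) • Ω, P y :=
        setIntegral_mono_on (integrable_finsetSum _ hint) hPint
          (hopen.measurableSet.const_smul₀ _) fun y _ =>
            sum_le_hasSum _ (fun m _ => h.nonneg _) (h.hasSum_translate y)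

end PeriodizedMollifier

end

/-! ### Depth zones of a convex domain -/

section

open scoped FourierTransform

lemma realFourierInv_sum {ι : Type*} (K : Finset ι) {G : ι → ℝ → ℝ} (hG : ∀ n, Integrable (G n))
    (ξ : ℝ) : realFourierInv (∑ n ∈ K, G n) ξ = ∑ n ∈ K, realFourierInv (G n) ξ := by
  simp only [realFourierInv_eq, Finset.sum_apply, Complex.ofReal_sum, Finset.sum_mul]
  exact integral_finsetSum _ fun n _ => integrable_mul_fourierChar (hG n) ξ

lemma realFourierInv_secondDiff {A : ℝ → ℝ} (hA : Integrable A) (τ ξ : ℝ) :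
    realFourierInv (secondDiff A τ) ξ
      = ((2 * Real.cos (2 * Real.pi * (ξ * τ)) - 2 : ℝ) : ℂ) * realFourierInv A ξ := by
  let shift (r s : ℝ) : ℝ := A ((s - r) / 1)
  have hshift (r : ℝ) : realFourierInv (shift r) ξ = 𝐞 (r * ξ) * realFourierInv A ξ := by
    rw [realFourierInv_comp_sub_div A r one_pos, Complex.ofReal_one, one_mul, one_mul]
  have hshiftInt (r : ℝ) : Integrable (shift r) := by
    simpa only [shift, div_one] using hA.comp_sub_right r
  have hsplit : secondDiff A τ = shift (-τ) + ((fun s => -2 * A s) + shift τ) := by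
    ext s
    simp only [secondDiff, shift, Pi.add_apply, sub_neg_eq_add, div_one]
    ring
  have hcos : (𝐞 (-τ * ξ) : ℂ) + 𝐞 (τ * ξ) = (2 * Real.cos (2 * Real.pi * (ξ * τ)) : ℝ) := by
    rw [Complex.ofReal_mul, Complex.ofReal_cos, Complex.ofReal_ofNat, Complex.two_cos,
      Real.fourierChar_apply, Real.fourierChar_apply, add_comm]
    congr 2 <;> push_cast <;> ring
  rw [hsplit, realFourierInv_add (hshiftInt _) ((hA.const_mul _).add (hshiftInt _)),
    realFourierInv_add (hA.const_mul _) (hshiftInt _), realFourierInv_const_mul, hshift, hshift,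
    Complex.ofReal_sub, ← hcos]
  push_cast
  ring

lemma secondDiff_comp_const_sub (a : ℝ → ℝ) (b τ u : ℝ) :
    secondDiff (fun u => a (b - u)) τ u = secondDiff a τ (b - u) := by
  simp only [secondDiff]
  ring_nf

lemma secondDiff_comp_neg (a : ℝ → ℝ) (τ u : ℝ) :
    secondDiff (fun u => a (-u)) τ (-u) = secondDiff a τ u := by
  simp only [secondDiff]
  ring_nf

lemma depthZone_eq_empty {q δ : ℝ} {n : ℕ} (hn : n ≠ 0) (h : q ≤ 2 ^ n * δ) :
    depthZone q δ n = ∅ := by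
  rw [depthZone_of_ne_zero q δ hn, Ico_eq_empty_of_le ((min_le_left _ _).trans h)]

variable {Ω : Set E2} {θ : E2}

lemma domainTransform_smul (hmeas : MeasurableSet Ω) (hvol : volume Ω ≠ ⊤) (hθ : ‖θ‖ = 1) (ξ : ℝ) :
    domainTransform Ω (ξ • θ) = realFourierInv (sliceLength Ω θ) ξ := by
  have hint : IntegrableOn (fun y : E2 => (𝐞 (⟪y, θ⟫ * ξ) : ℂ)) Ω :=
    .of_bound hvol.lt_top (continuous_coe_fourierChar.comp (by fun_prop)).aestronglyMeasurable 1
      (.of_forall fun y => (Circle.norm_coe _).le)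
  have hslice := setIntegral_comp_inner hmeas hθ (F := fun s => (𝐞 (s * ξ) : ℂ)) hint
  simp only [domainTransform, inner_smul_right, mul_comm ξ, hslice, realFourierInv_eq,
    Complex.real_smul]

/-- The second differences, with step `τ`, of the slice lengths of `Ω` orthogonal to `θ`, restricted
to the slices whose depth below the support line in direction `θ` lies in `Z`. -/
def depthPart (Ω : Set E2) (θ : E2) (τ : ℝ) (Z : Set ℝ) : ℝ → ℝ :=
  {s | suppFn Ω θ - s ∈ Z}.indicator (secondDiff (sliceLength Ω θ) τ)

variable {τ q δ : ℝ} {Z : Set ℝ}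

lemma depthPart_apply (s : ℝ) : depthPart Ω θ τ Z s
    = Z.indicator (fun _ => (1 : ℝ)) (suppFn Ω θ - s) * secondDiff (sliceLength Ω θ) τ s := by
  by_cases hs : suppFn Ω θ - s ∈ Z <;> simp [depthPart, hs]

lemma depthPart_neg (s : ℝ) : depthPart Ω (-θ) τ Z (-s)
    = Z.indicator (fun _ => (1 : ℝ)) (suppFn Ω (-θ) + s) * secondDiff (sliceLength Ω θ) τ s := by
  have hreflect : sliceLength Ω (-θ) = fun s => sliceLength Ω θ (-s) :=
    funext fun s => sliceLength_neg s
  rw [depthPart_apply, sub_neg_eq_add, hreflect, secondDiff_comp_neg]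

lemma integrable_depthPart (hmeas : MeasurableSet Ω) (hvol : volume Ω ≠ ⊤) (hθ : ‖θ‖ = 1) (τ : ℝ)
    (hZ : MeasurableSet Z) : Integrable (depthPart Ω θ τ Z) :=
  (integrable_secondDiff (integrable_sliceLength hmeas hvol hθ) τ).indicator
    (measurable_const.sub measurable_id hZ)

lemma integral_abs_depthPart (hZ : MeasurableSet Z) : ∫ s, |depthPart Ω θ τ Z s|
    = ∫ u in Z, |secondDiff (fun u => sliceLength Ω θ (suppFn Ω θ - u)) τ u| := by
  rw [← integral_indicator hZ, ← integral_sub_left_eq_self _ volume (suppFn Ω θ)]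
  refine integral_congr_ae (.of_forall fun u => ?_)
  by_cases hu : u ∈ Z <;>
    simp [depthPart, hu, secondDiff_comp_const_sub]

lemma concaveProfile_sliceLength (hconv : Convex ℝ Ω) (hopen : IsOpen Ω)
    (hbdd : Bornology.IsBounded Ω) (hne : Ω.Nonempty) (hθ : ‖θ‖ = 1) :
    ConcaveProfile (fun u => sliceLength Ω θ (suppFn Ω θ - u)) (suppFn Ω θ + suppFn Ω (-θ)) where
  nonneg u := sliceLength_nonneg _
  concaveOn := by
    have hconc := concaveOn_sliceLength hconv hopen hbdd hθ
    rw [setOf_slice_nonempty_eq_Ioo hconv hopen hbdd hne hθ] at hconc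
    simpa only [preimage_const_sub_Ioo, sub_self, sub_neg_eq_add] using
      concaveOn_comp_const_sub hconc (suppFn Ω θ)
  eq_zero u hu := by
    have hslice : slice Ω θ (suppFn Ω θ - u) = ∅ := by
      contrapose! hu
      have hmem : suppFn Ω θ - u ∈ {s | (slice Ω θ s).Nonempty} := hu
      rw [setOf_slice_nonempty_eq_Ioo hconv hopen hbdd hne hθ] at hmem
      exact ⟨by linarith [hmem.2], by linarith [hmem.1]⟩
    rw [sliceLength, hslice, measureReal_empty]

lemma integral_abs_depthPart_depthZone_le (hconv : Convex ℝ Ω) (hopen : IsOpen Ω)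
    (hbdd : Bornology.IsBounded Ω) (hne : Ω.Nonempty) (hθ : ‖θ‖ = 1) (hδ : 0 < δ) (hτ : 0 < τ)
    (hτδ : τ ≤ δ / 4) (hq : 4 * q ≤ suppFn Ω θ + suppFn Ω (-θ)) (n : ℕ) :
    ∫ s, |depthPart Ω θ τ (depthZone q δ n) s| ≤ 36 * (δ / 2 ^ n) * capDiam Ω θ (2 ^ n * δ) := by
  rw [integral_abs_depthPart (measurableSet_depthZone q δ n)]
  have hint := integrable_sliceLength hopen.measurableSet hbdd.measure_lt_top.ne hθ
  exact (concaveProfile_sliceLength hconv hopen hbdd hne hθ).setIntegral_depthZone_le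
    (hint.comp_sub_left _) (monotone_capDiam hbdd) (sliceLength_le_capDiam hconv hopen hbdd hθ)
    hδ hτ hτδ hq n

lemma integral_abs_depthPart_Icc_le (hconv : Convex ℝ Ω) (hopen : IsOpen Ω)
    (hne : Ω.Nonempty) (hθ : ‖θ‖ = 1) {r : ℝ} (hr : 0 ≤ r) (hΩ : Ω ⊆ Metric.closedBall 0 r)
    (hτ : 0 < τ) (hτq : τ ≤ q / 2) (hq : 4 * q ≤ suppFn Ω θ + suppFn Ω (-θ)) :
    ∫ s, |depthPart Ω θ τ (Icc q (suppFn Ω θ + suppFn Ω (-θ) - q)) s|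
      ≤ 4 * τ ^ 2 * (2 * r) / q := by
  have hbdd := Metric.isBounded_closedBall.subset hΩ
  rw [integral_abs_depthPart measurableSet_Icc]
  have hint := integrable_sliceLength hopen.measurableSet hbdd.measure_lt_top.ne hθ
  exact (concaveProfile_sliceLength hconv hopen hbdd hne hθ).setIntegral_Icc_le
    (hint.comp_sub_left _) hτ hτq hq fun u => sliceLength_le hθ hr hΩ _

/-- Above the support line the second differences reach only as far as one step. -/
lemma abs_sub_suppFn_le_of_depthPart_ne_zero (hconv : Convex ℝ Ω) (hopen : IsOpen Ω)
    (hbdd : Bornology.IsBounded Ω) (hne : Ω.Nonempty) (hθ : ‖θ‖ = 1) (hδ : 0 ≤ δ)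
    (hτ : 0 ≤ τ) (hτδ : τ ≤ δ) {n : ℕ} {s : ℝ}
    (hs : depthPart Ω θ τ (depthZone q δ n) s ≠ 0) : |s - suppFn Ω θ| ≤ 2 ^ (n + 1) * δ := by
  rw [depthPart_apply] at hs
  have hmem : suppFn Ω θ - s ∈ depthZone q δ n := mem_of_indicator_ne_zero (left_ne_zero_of_mul hs)
  have hdiff : secondDiff (sliceLength Ω θ) τ s ≠ 0 := right_ne_zero_of_mul hs
  have habove : -τ < suppFn Ω θ - s := by
    contrapose! hdiff
    rw [← sub_sub_cancel (suppFn Ω θ) s, ← secondDiff_comp_const_sub]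
    exact (concaveProfile_sliceLength hconv hopen hbdd hne hθ).secondDiff_eq_zero hτ hdiff
  have hδle : δ ≤ 2 ^ (n + 1) * δ := le_mul_of_one_le_left hδ (one_le_pow₀ one_le_two)
  exact abs_le.2 ⟨by linarith [hmem.2.1], by linarith⟩

lemma sum_depthPart_depthZone (hδ : 0 ≤ δ) {K : ℕ} (hK : q ≤ 2 ^ (K + 1) * δ) :
    ∑ n ∈ Finset.range (K + 1), depthPart Ω θ τ (depthZone q δ n) = depthPart Ω θ τ (Iio q) := by
  have hzones : {u | u < q ∧ u < 2 ^ (K + 1) * δ} = Iio q :=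
    Set.ext fun u => ⟨fun h => h.1, fun h => ⟨h, lt_of_lt_of_le h hK⟩⟩
  ext s
  simp only [Finset.sum_apply, depthPart_apply, ← Finset.sum_mul, sum_indicator_depthZone q hδ,
    hzones]

lemma secondDiff_sliceLength_eq_add (hq : 2 * q ≤ suppFn Ω θ + suppFn Ω (-θ)) (τ : ℝ) :
    secondDiff (sliceLength Ω θ) τ = depthPart Ω θ τ (Iio q)
      + (depthPart Ω θ τ (Icc q (suppFn Ω θ + suppFn Ω (-θ) - q))
        + fun s => depthPart Ω (-θ) τ (Iio q) (-s)) := by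
  ext s
  simp only [Pi.add_apply, depthPart_neg]
  simp only [depthPart_apply, indicator_apply, mem_Iio, mem_Icc]
  split_ifs <;> first | (exfalso; grind) | ring

lemma realFourierInv_secondDiff_sliceLength (hmeas : MeasurableSet Ω) (hvol : volume Ω ≠ ⊤)
    (hθ : ‖θ‖ = 1) (hq : 2 * q ≤ suppFn Ω θ + suppFn Ω (-θ)) (hδ : 0 ≤ δ) {K : ℕ}
    (hK : q ≤ 2 ^ (K + 1) * δ) (τ ξ : ℝ) :
    realFourierInv (secondDiff (sliceLength Ω θ) τ) ξ
      = ∑ n ∈ Finset.range (K + 1), realFourierInv (depthPart Ω θ τ (depthZone q δ n)) ξ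
        + (realFourierInv (depthPart Ω θ τ (Icc q (suppFn Ω θ + suppFn Ω (-θ) - q))) ξ
          + (starRingEnd ℂ) (∑ n ∈ Finset.range (K + 1),
            realFourierInv (depthPart Ω (-θ) τ (depthZone q δ n)) ξ)) := by
  have hint {θ : E2} (hθ : ‖θ‖ = 1) {Z : Set ℝ} (hZ : MeasurableSet Z) :
      Integrable (depthPart Ω θ τ Z) := integrable_depthPart hmeas hvol hθ τ hZ
  have hsum {θ : E2} (hθ : ‖θ‖ = 1) :
      ∑ n ∈ Finset.range (K + 1), realFourierInv (depthPart Ω θ τ (depthZone q δ n)) ξ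
        = realFourierInv (depthPart Ω θ τ (Iio q)) ξ := by
    rw [← realFourierInv_sum _ fun n => hint hθ (measurableSet_depthZone q δ n),
      sum_depthPart_depthZone hδ hK]
  have hneg : ‖-θ‖ = 1 := by rw [norm_neg, hθ]
  rw [hsum hθ, hsum hneg, conj_realFourierInv, ← realFourierInv_comp_neg,
    secondDiff_sliceLength_eq_add hq,
    realFourierInv_add (hint hθ measurableSet_Iio)
      ((hint hθ measurableSet_Icc).add (hint hneg measurableSet_Iio).comp_neg),
    realFourierInv_add (hint hθ measurableSet_Icc) (hint hneg measurableSet_Iio).comp_neg]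

end

/-! ### Sums over lattice points -/

section

lemma one_le_norm_ek {m : Fin 2 → ℤ} (hm : m ≠ 0) : 1 ≤ ‖ek m‖ := by
  obtain ⟨i, hi⟩ := Function.ne_iff.1 hm
  exact le_trans (by exact_mod_cast Int.one_le_abs hi) (abs_coord_le_norm_ek m i)

lemma norm_ek_pos {m : Fin 2 → ℤ} (hm : m ≠ 0) : 0 < ‖ek m‖ :=
  one_pos.trans_le (one_le_norm_ek hm)

lemma summable_norm_ek_rpow {s : ℝ} (hs : 2 < s) : Summable fun m : Fin 2 → ℤ => ‖ek m‖ ^ (-s) := by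
  refine (EisensteinSeries.summable_one_div_norm_rpow hs).of_nonneg_of_le
    (fun m => by positivity) fun m => ?_
  rcases eq_or_ne m 0 with rfl | hm
  · rw [ek_zero, norm_zero, Real.zero_rpow (by linarith)]
    positivity
  · refine Real.rpow_le_rpow_of_nonpos (norm_pos_iff.2 hm) ?_ (by linarith)
    exact (pi_norm_le_iff_of_nonneg (norm_nonneg _)).2 fun i =>
      (Int.norm_eq_abs _).trans_le (abs_coord_le_norm_ek m i)

/-- The maximum norm of an integer vector, as a natural number; it labels the squares over which
lattice sums are grouped. -/
def maxNorm (m : Fin 2 → ℤ) : ℕ := max (m 0).natAbs (m 1).natAbs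

lemma maxNorm_le_norm_ek (m : Fin 2 → ℤ) : (maxNorm m : ℝ) ≤ ‖ek m‖ := by
  rw [maxNorm, Nat.cast_max, Nat.cast_natAbs, Nat.cast_natAbs, Int.cast_abs, Int.cast_abs]
  exact max_le (abs_coord_le_norm_ek m 0) (abs_coord_le_norm_ek m 1)

lemma maxNorm_pos {m : Fin 2 → ℤ} (hm : m ≠ 0) : 0 < maxNorm m := by
  obtain ⟨i, hi⟩ := Function.ne_iff.1 hm
  fin_cases i
  · exact lt_max_of_lt_left (Int.natAbs_pos.2 hi)
  · exact lt_max_of_lt_right (Int.natAbs_pos.2 hi)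

lemma card_filter_maxNorm_eq_le (K : Finset (Fin 2 → ℤ)) {n : ℕ} (hn : n ≠ 0) :
    (K.filter fun m => maxNorm m = n).card ≤ 8 * n := by
  rw [← Int.card_box hn]
  refine Finset.card_le_card_of_injOn (finTwoArrowEquiv ℤ) (fun m hm => ?_)
    (finTwoArrowEquiv ℤ).injective.injOn
  rw [Finset.mem_coe, Int.mem_box]
  exact (Finset.mem_filter.1 hm).2

lemma sum_filter_maxNorm_eq_le (K : Finset (Fin 2 → ℤ)) {n : ℕ} (hn : n ≠ 0) :
    ∑ m ∈ K with maxNorm m = n, (‖ek m‖ ^ 2)⁻¹ ≤ 8 * (n : ℝ)⁻¹ := by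
  have : (0 : ℝ) < n := Nat.cast_pos.2 (Nat.pos_of_ne_zero hn)
  have hterm (m : Fin 2 → ℤ) (hm : m ∈ K.filter fun m => maxNorm m = n) :
      (‖ek m‖ ^ 2)⁻¹ ≤ ((n : ℝ) ^ 2)⁻¹ := by
    have hle := maxNorm_le_norm_ek m
    rw [(Finset.mem_filter.1 hm).2] at hle
    gcongr
  calc ∑ m ∈ K with maxNorm m = n, (‖ek m‖ ^ 2)⁻¹
      ≤ (K.filter fun m => maxNorm m = n).card * ((n : ℝ) ^ 2)⁻¹ := by
        simpa only [nsmul_eq_mul] using Finset.sum_le_card_nsmul _ _ _ hterm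
    _ ≤ (8 * n : ℕ) * ((n : ℝ) ^ 2)⁻¹ := by gcongr; exact card_filter_maxNorm_eq_le K hn
    _ = 8 * (n : ℝ)⁻¹ := by push_cast; field_simp

lemma half_le_log {R : ℝ} (hR : 2 ≤ R) : 1 / 2 ≤ Real.log R := by
  linarith [Real.log_two_gt_d9, Real.log_le_log two_pos hR]

lemma sum_inv_norm_ek_sq_le_log {R : ℝ} (hR : 2 ≤ R) {K : Finset (Fin 2 → ℤ)}
    (hK : ∀ m ∈ K, m ≠ 0 ∧ ‖ek m‖ ≤ R ^ 2) :
    ∑ m ∈ K, (‖ek m‖ ^ 2)⁻¹ ≤ 32 * Real.log R := by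
  have hmaps (m : Fin 2 → ℤ) (hm : m ∈ K) : maxNorm m ∈ Finset.Icc 1 ⌊R ^ 2⌋₊ :=
    Finset.mem_Icc.2 ⟨maxNorm_pos (hK m hm).1,
      Nat.le_floor ((maxNorm_le_norm_ek m).trans (hK m hm).2)⟩
  have hharmonic : ∑ n ∈ Finset.Icc 1 ⌊R ^ 2⌋₊, (n : ℝ)⁻¹ ≤ 1 + 2 * Real.log R := by
    have hfloor := harmonic_floor_le_one_add_log (R ^ 2) (by nlinarith)
    rw [harmonic_eq_sum_Icc, Real.log_pow] at hfloor
    push_cast at hfloor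
    exact hfloor
  calc ∑ m ∈ K, (‖ek m‖ ^ 2)⁻¹
      = ∑ n ∈ Finset.Icc 1 ⌊R ^ 2⌋₊, ∑ m ∈ K with maxNorm m = n, (‖ek m‖ ^ 2)⁻¹ :=
        (Finset.sum_fiberwise_of_maps_to hmaps _).symm
    _ ≤ ∑ n ∈ Finset.Icc 1 ⌊R ^ 2⌋₊, 8 * (n : ℝ)⁻¹ := Finset.sum_le_sum fun n hn =>
        sum_filter_maxNorm_eq_le K (Nat.one_le_iff_ne_zero.1 (Finset.mem_Icc.1 hn).1)
    _ ≤ 8 * (1 + 2 * Real.log R) := by rw [← Finset.mul_sum]; gcongr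
    _ ≤ 32 * Real.log R := by linarith [half_le_log hR]

lemma omegaR_nonneg (N : ℕ) {R : ℝ} (hR : 0 < R) (ξ : E2) : 0 ≤ omegaR N R ξ := by
  unfold omegaR
  positivity

lemma omegaR_eq_inv_pow (N : ℕ) {R : ℝ} (hR : 0 < R) (ξ : E2) :
    omegaR N R ξ = ((1 + ‖ξ‖ / R) ^ N)⁻¹ := by
  rw [omegaR, Real.rpow_neg (by positivity), Real.rpow_natCast]

lemma omegaR_le {N : ℕ} (hN : 2 ≤ N) {R : ℝ} (hR : 0 < R) {ξ : E2} (hξ : ξ ≠ 0) :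
    omegaR N R ξ ≤ R ^ 2 * ‖ξ‖ ^ (-2 : ℝ) := by
  have hquot : 0 < ‖ξ‖ / R := div_pos (norm_pos_iff.2 hξ) hR
  calc omegaR N R ξ = ((1 + ‖ξ‖ / R) ^ N)⁻¹ := omegaR_eq_inv_pow N hR ξ
    _ ≤ ((1 + ‖ξ‖ / R) ^ 2)⁻¹ :=
        inv_anti₀ (by positivity) (pow_le_pow_right₀ (by linarith) hN)
    _ ≤ ((‖ξ‖ / R) ^ 2)⁻¹ := by gcongr; linarith
    _ = R ^ 2 * ‖ξ‖ ^ (-2 : ℝ) := by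
        rw [Real.rpow_neg (norm_nonneg _), Real.rpow_ofNat, div_pow, inv_div, div_eq_mul_inv]

/-- The summand `ω_R(k) |k|⁻¹ μ(k/|k|, 2ⁿ/(|k|R))` of `Γ_n`, which is zero unless `|k| > 2ⁿ/R`. -/
def capWeight (Ω : Set E2) (N : ℕ) (R : ℝ) (n : ℕ) (k : Fin 2 → ℤ) : ℝ :=
  if (2 : ℝ) ^ n / R < ‖ek k‖ then
    omegaR N R (ek k) * ‖ek k‖⁻¹ * capDiam Ω ((‖ek k‖)⁻¹ • ek k) ((2 : ℝ) ^ n / (‖ek k‖ * R))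
  else 0

variable {Ω : Set E2} {N : ℕ} {R r : ℝ}

lemma Gam_eq (n : ℕ) : Gam Ω N R n = R * ∑' k, capWeight Ω N R n k := rfl

lemma capWeight_nonneg (hR : 0 < R) (n : ℕ) (k : Fin 2 → ℤ) : 0 ≤ capWeight Ω N R n k := by
  unfold capWeight
  split_ifs
  · exact mul_nonneg (mul_nonneg (omegaR_nonneg N hR _) (by positivity)) (capDiam_nonneg _)
  · exact le_rfl

lemma rpow_neg_half_le {R x : ℝ} {n : ℕ} (hR : 0 < R) (hx : 2 ^ n / R ≤ x) :
    x ^ (-(1 / 2) : ℝ) ≤ R ^ (1 / 2 : ℝ) * (2 ^ (-(1 / 2) : ℝ)) ^ n := by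
  refine (Real.rpow_le_rpow_of_nonpos (by positivity) hx (by norm_num)).trans_eq ?_
  rw [Real.div_rpow (by positivity) hR.le, Real.rpow_neg hR.le, div_inv_eq_mul, mul_comm,
    Real.rpow_pow_comm zero_le_two]

/-- As `2ⁿ < |k|R` on the range of summation, half a power of `|k|` can be traded for the
factor `2^(-n/2)`, which makes both the sum over `k` and the sum over `n` converge. -/
lemma capWeight_le (hr : 0 ≤ r) (hΩ : Ω ⊆ Metric.closedBall 0 r) (hN : 2 ≤ N) (hR : 0 < R) (n : ℕ)
    (k : Fin 2 → ℤ) : capWeight Ω N R n k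
      ≤ 2 * r * R ^ 2 * (R ^ (1 / 2 : ℝ) * (2 ^ (-(1 / 2) : ℝ)) ^ n)
        * ‖ek k‖ ^ (-(5 / 2) : ℝ) := by
  unfold capWeight
  split_ifs with hlarge
  swap
  · positivity
  have hpos : 0 < ‖ek k‖ := (by positivity : 0 < (2 : ℝ) ^ n / R).trans hlarge
  have hexp : ‖ek k‖ ^ (-2 : ℝ) * ‖ek k‖⁻¹ = ‖ek k‖ ^ (-(1 / 2) : ℝ) * ‖ek k‖ ^ (-(5 / 2) : ℝ) := by
    rw [← Real.rpow_neg_one, ← Real.rpow_add hpos, ← Real.rpow_add hpos]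
    norm_num
  calc omegaR N R (ek k) * ‖ek k‖⁻¹ * capDiam Ω ((‖ek k‖)⁻¹ • ek k) ((2 : ℝ) ^ n / (‖ek k‖ * R))
      ≤ (R ^ 2 * ‖ek k‖ ^ (-2 : ℝ)) * ‖ek k‖⁻¹ * (2 * r) := by
        gcongr
        · exact capDiam_nonneg _
        · exact omegaR_le hN hR (norm_pos_iff.1 hpos)
        · exact capDiam_le hr hΩ _
    _ = 2 * r * R ^ 2 * ‖ek k‖ ^ (-(1 / 2) : ℝ) * ‖ek k‖ ^ (-(5 / 2) : ℝ) := by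
        rw [mul_assoc _ _ (‖ek k‖ ^ (-(5 / 2) : ℝ)), ← hexp]
        ring
    _ ≤ 2 * r * R ^ 2 * (R ^ (1 / 2 : ℝ) * (2 ^ (-(1 / 2) : ℝ)) ^ n)
        * ‖ek k‖ ^ (-(5 / 2) : ℝ) := by
        gcongr
        exact rpow_neg_half_le hR hlarge.le

lemma summable_capWeight (hbdd : Bornology.IsBounded Ω) (hN : 2 ≤ N) (hR : 0 < R) (n : ℕ) :
    Summable (capWeight Ω N R n) := by
  obtain ⟨r, hr, hΩ⟩ := hbdd.subset_closedBall_lt 0 0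
  exact .of_nonneg_of_le (capWeight_nonneg hR n) (capWeight_le hr.le hΩ hN hR n)
    ((summable_norm_ek_rpow (by norm_num)).mul_left _)

lemma Gam_nonneg (hR : 0 < R) (n : ℕ) : 0 ≤ Gam Ω N R n :=
  mul_nonneg hR.le (tsum_nonneg (capWeight_nonneg hR n))

lemma summable_Gam (hbdd : Bornology.IsBounded Ω) (hN : 2 ≤ N) (hR : 0 < R) :
    Summable (Gam Ω N R) := by
  obtain ⟨r, hr, hΩ⟩ := hbdd.subset_closedBall_lt 0 0
  have hlattice := summable_norm_ek_rpow (s := 5 / 2) (by norm_num)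
  have hgeometric : Summable fun n : ℕ => ((2 : ℝ) ^ (-(1 / 2) : ℝ)) ^ n :=
    summable_geometric_of_lt_one (by positivity)
      (Real.rpow_lt_one_of_one_lt_of_neg one_lt_two (by norm_num))
  refine .of_nonneg_of_le (Gam_nonneg hR) (fun n => ?_) (hgeometric.mul_left
    (R * (2 * r * R ^ 2 * R ^ (1 / 2 : ℝ) * ∑' k, ‖ek k‖ ^ (-(5 / 2) : ℝ))))
  calc Gam Ω N R n ≤ R * ∑' k, 2 * r * R ^ 2 * (R ^ (1 / 2 : ℝ) * (2 ^ (-(1 / 2) : ℝ)) ^ n)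
        * ‖ek k‖ ^ (-(5 / 2) : ℝ) := by
        rw [Gam_eq]
        gcongr
        · exact summable_capWeight hbdd hN hR n
        · exact hlattice.mul_left _
        · exact capWeight_le hr.le hΩ hN hR n _
    _ = R * (2 * r * R ^ 2 * R ^ (1 / 2 : ℝ) * ∑' k, ‖ek k‖ ^ (-(5 / 2) : ℝ))
        * (2 ^ (-(1 / 2) : ℝ)) ^ n := by
        rw [tsum_mul_left]
        ring

end

/-! ### The smoothed rest -/

section

open scoped FourierTransform

/-- A convex domain pinched between the discs of radii `r₁ ≤ 1` and `r₂` about the origin. -/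
structure PinchedDomain (r₁ r₂ : ℝ) (Ω : Set E2) : Prop where
  pos : 0 < r₁
  le_one : r₁ ≤ 1
  convex : Convex ℝ Ω
  isOpen : IsOpen Ω
  ball_subset : Metric.ball 0 r₁ ⊆ Ω
  subset_closedBall : Ω ⊆ Metric.closedBall 0 r₂

namespace PinchedDomain

variable {r₁ r₂ : ℝ} {Ω : Set E2}

lemma isBounded (h : PinchedDomain r₁ r₂ Ω) : Bornology.IsBounded Ω :=
  Metric.isBounded_closedBall.subset h.subset_closedBall

lemma zero_mem (h : PinchedDomain r₁ r₂ Ω) : 0 ∈ Ω :=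
  h.ball_subset (Metric.mem_ball_self h.pos)

lemma radius_nonneg (h : PinchedDomain r₁ r₂ Ω) : 0 ≤ r₂ :=
  Metric.nonempty_closedBall.1 ⟨0, h.subset_closedBall h.zero_mem⟩

lemma volume_ne_top (h : PinchedDomain r₁ r₂ Ω) : volume Ω ≠ ⊤ :=
  h.isBounded.measure_lt_top.ne

lemma volume_le (h : PinchedDomain r₁ r₂ Ω) :
    volume.real Ω ≤ volume.real (Metric.closedBall (0 : E2) r₂) :=
  measureReal_mono h.subset_closedBall measure_closedBall_lt_top.ne

lemma two_mul_le_width (h : PinchedDomain r₁ r₂ Ω) {θ : E2} (hθ : ‖θ‖ = 1) :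
    2 * r₁ ≤ suppFn Ω θ + suppFn Ω (-θ) := by
  have hneg : ‖-θ‖ = 1 := by rw [norm_neg, hθ]
  linarith [le_suppFn_of_ball_subset h.pos h.ball_subset h.isBounded hθ,
    le_suppFn_of_ball_subset h.pos h.ball_subset h.isBounded hneg]

end PinchedDomain

lemma ek_neg (m : Fin 2 → ℤ) : ek (-m) = -ek m := by
  ext i
  simp [ek_apply]

lemma norm_ek_neg (m : Fin 2 → ℤ) : ‖ek (-m)‖ = ‖ek m‖ := by rw [ek_neg, norm_neg]

/-- The unit vector `m/|m|`; it is `0` for `m = 0`. -/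
def direction (m : Fin 2 → ℤ) : E2 := ‖ek m‖⁻¹ • ek m

lemma direction_neg (m : Fin 2 → ℤ) : direction (-m) = -direction m := by
  rw [direction, direction, norm_ek_neg, ek_neg, smul_neg]

lemma norm_direction {m : Fin 2 → ℤ} (hm : m ≠ 0) : ‖direction m‖ = 1 := by
  rw [direction, norm_smul, norm_inv, norm_norm, inv_mul_cancel₀ (norm_ek_pos hm).ne']

lemma norm_smul_direction {m : Fin 2 → ℤ} (hm : m ≠ 0) : ‖ek m‖ • direction m = ek m := by
  rw [direction, smul_smul, mul_inv_cancel₀ (norm_ek_pos hm).ne', one_smul]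

/-- The nonzero frequencies `m` with `|m| ≤ R²`. -/
def frequencies (R : ℝ) : Finset (Fin 2 → ℤ) := (finite_setOf_norm_ek_le (R ^ 2)).toFinset.erase 0

lemma mem_frequencies {R : ℝ} {m : Fin 2 → ℤ} : m ∈ frequencies R ↔ m ≠ 0 ∧ ‖ek m‖ ≤ R ^ 2 := by
  simp [frequencies]

lemma sum_frequencies_neg {M : Type*} [AddCommMonoid M] (R : ℝ) (F : (Fin 2 → ℤ) → M) :
    ∑ m ∈ frequencies R, F (-m) = ∑ m ∈ frequencies R, F m :=
  Finset.sum_equiv (Equiv.neg _)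
    (fun m => by simp only [mem_frequencies, Equiv.neg_apply, neg_ne_zero, norm_ek_neg])
    fun m _ => rfl

lemma norm_sub_sum_frequencies_le {R C : ℝ} (hR : 0 < R) (hC : 0 ≤ C) {a : (Fin 2 → ℤ) → ℂ} {D : ℂ}
    (ha : HasSum (fun m => if m = 0 then 0 else a m) D)
    (hbound : ∀ m, ‖a m‖ ≤ C * (R ^ 2 * ((1 + ‖ek m‖ / R) ^ 8)⁻¹)) :
    ‖D - ∑ m ∈ frequencies R, a m‖ ≤ C * ∑' m, ‖ek m‖ ^ (-3 : ℝ) := by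
  have hpartial : HasSum ((frequencies R : Set (Fin 2 → ℤ)).indicator a)
      (∑ m ∈ frequencies R, a m) := by
    rw [← Finset.sum_indicator_subset a subset_rfl]
    exact hasSum_sum_of_ne_finset_zero fun m hm => indicator_of_notMem hm a
  refine (ha.sub hpartial).norm_le_of_bounded
    ((summable_norm_ek_rpow (by norm_num)).hasSum.mul_left C) fun m => ?_
  by_cases hm : m ∈ frequencies R
  · rw [indicator_of_mem hm, if_neg (mem_frequencies.1 hm).1, sub_self, norm_zero]
    positivity
  rw [indicator_of_notMem hm, sub_zero]
  split_ifs with hm0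
  · rw [norm_zero]
    positivity
  have hlarge : R ^ 2 < ‖ek m‖ := by
    contrapose! hm
    exact mem_frequencies.2 ⟨hm0, hm⟩
  have hpos := norm_ek_pos hm0
  calc ‖a m‖ ≤ C * (R ^ 2 * ((1 + ‖ek m‖ / R) ^ 8)⁻¹) := hbound m
    _ ≤ C * (R ^ 2 * ((‖ek m‖ / R) ^ 8)⁻¹) := by gcongr; linarith
    _ = C * ((R ^ 2) ^ 5 / ‖ek m‖ ^ 8) := by field_simp
    _ ≤ C * (‖ek m‖ ^ 5 / ‖ek m‖ ^ 8) := by gcongr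
    _ = C * ‖ek m‖ ^ (-3 : ℝ) := by
        rw [Real.rpow_neg hpos.le, Real.rpow_ofNat]
        field_simp

variable {r₁ r₂ R : ℝ} {Ω : Set E2} {m : Fin 2 → ℤ}

/-- The depth of a cap of `Ω` in direction `m` which is seen at frequency `m` by the dilate
`RΩ`. -/
def depthUnit (R : ℝ) (m : Fin 2 → ℤ) : ℝ := 1 / (‖ek m‖ * R)

lemma depthUnit_pos (hR : 0 < R) (hm : m ≠ 0) : 0 < depthUnit R m :=
  one_div_pos.2 (mul_pos (norm_ek_pos hm) hR)

lemma depthUnit_le_one (hR : 1 ≤ R) (hm : m ≠ 0) : depthUnit R m ≤ 1 :=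
  div_le_one_of_le₀ (one_le_mul_of_one_le_of_one_le (one_le_norm_ek hm) hR) (by positivity)

lemma norm_ek_mul_depthUnit (hm : m ≠ 0) : ‖ek m‖ * depthUnit R m = 1 / R := by
  have := norm_ek_pos hm
  rw [depthUnit]
  field_simp

/-- The part of the second difference of slice lengths in direction `m/|m|` coming from the `n`-th
dyadic depth zone; the step is proportional to `depthUnit R m` so that the multiplier in
`realFourierInv_secondDiff` does not depend on `m`. -/
def zonePart (r₁ R : ℝ) (Ω : Set E2) (n : ℕ) (m : Fin 2 → ℤ) : ℝ → ℝ :=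
  depthPart Ω (direction m) (r₁ / 8 * depthUnit R m) (depthZone (r₁ / 2) (depthUnit R m) n)

lemma zonePart_zero (n : ℕ) : zonePart r₁ R Ω n 0 = 0 := by
  ext s
  have hstep : r₁ / 8 * depthUnit R 0 = 0 := by simp [depthUnit, ek_zero]
  rw [zonePart, depthPart_apply, hstep, secondDiff, add_zero, sub_zero, Pi.zero_apply]
  ring

lemma integrable_zonePart (h : PinchedDomain r₁ r₂ Ω) (n : ℕ) (m : Fin 2 → ℤ) :
    Integrable (zonePart r₁ R Ω n m) := by
  rcases eq_or_ne m 0 with rfl | hm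
  · rw [zonePart_zero]
    exact integrable_zero _ _ _
  · exact integrable_depthPart h.isOpen.measurableSet h.volume_ne_top (norm_direction hm) _
      (measurableSet_depthZone _ _ _)

lemma zonePart_eq_zero (h : PinchedDomain r₁ r₂ Ω) (hR : 2 ≤ R) {n : ℕ}
    (hm : ‖ek m‖ ≤ 2 ^ n / R) : zonePart r₁ R Ω n m = 0 := by
  rcases eq_or_ne m 0 with rfl | hm0
  · exact zonePart_zero n
  have hprod : ‖ek m‖ * R ≤ 2 ^ n := (le_div_iff₀ (by linarith)).1 hm
  have hone := one_le_norm_ek hm0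
  have hn : n ≠ 0 := by
    rintro rfl
    nlinarith
  have hlarge : r₁ / 2 ≤ 2 ^ n * depthUnit R m := by
    have : 1 ≤ 2 ^ n * depthUnit R m := by
      rw [depthUnit, mul_one_div]
      exact (one_le_div (by positivity)).2 hprod
    linarith [h.le_one]
  ext s
  simp [zonePart, depthPart_apply, depthZone_eq_empty hn hlarge]

lemma omegaR_mul_integral_abs_zonePart_le (h : PinchedDomain r₁ r₂ Ω) (N : ℕ) (hR : 2 ≤ R) (n : ℕ)
    (m : Fin 2 → ℤ) :
    omegaR N R (ek m) * ∫ s, |zonePart r₁ R Ω n m s| ≤ 36 / (2 ^ n * R) * capWeight Ω N R n m := by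
  have hR0 : 0 < R := by linarith
  unfold capWeight
  split_ifs with hm
  swap
  · simp [zonePart_eq_zero h hR (not_lt.1 hm)]
  have hm0 : m ≠ 0 := by
    rintro rfl
    rw [ek_zero, norm_zero] at hm
    exact hm.not_ge (by positivity)
  have hδ := depthUnit_pos hR0 hm0
  have hint : ∫ s, |zonePart r₁ R Ω n m s|
      ≤ 36 * (depthUnit R m / 2 ^ n) * capDiam Ω (direction m) (2 ^ n * depthUnit R m) :=
    integral_abs_depthPart_depthZone_le h.convex h.isOpen h.isBounded ⟨0, h.zero_mem⟩
      (norm_direction hm0) hδ (by have := h.pos; positivity) (by nlinarith [h.le_one])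
      (by linarith [h.two_mul_le_width (norm_direction hm0)]) n
  calc omegaR N R (ek m) * ∫ s, |zonePart r₁ R Ω n m s|
      ≤ omegaR N R (ek m)
        * (36 * (depthUnit R m / 2 ^ n) * capDiam Ω (direction m) (2 ^ n * depthUnit R m)) := by
        gcongr
        exact omegaR_nonneg N hR0 _
    _ = 36 / (2 ^ n * R) * (omegaR N R (ek m) * ‖ek m‖⁻¹
        * capDiam Ω (‖ek m‖⁻¹ • ek m) (2 ^ n / (‖ek m‖ * R))) := by
        rw [depthUnit, direction, mul_one_div]
        field_simp

lemma abs_norm_ek_mul_sub_suppFn_le (h : PinchedDomain r₁ r₂ Ω) (hR : 0 < R) {n : ℕ} {s : ℝ}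
    (hs : zonePart r₁ R Ω n m s ≠ 0) : |‖ek m‖ * s - suppFn Ω (ek m)| ≤ 2 ^ (n + 1) / R := by
  have hm : m ≠ 0 := by
    rintro rfl
    simp [zonePart_zero] at hs
  have hδ := depthUnit_pos hR hm
  have hle := abs_sub_suppFn_le_of_depthPart_ne_zero h.convex h.isOpen h.isBounded
    ⟨0, h.zero_mem⟩ (norm_direction hm) hδ.le (by have := h.pos; positivity)
    (by nlinarith [h.le_one]) hs
  calc |‖ek m‖ * s - suppFn Ω (ek m)| = ‖ek m‖ * |s - suppFn Ω (direction m)| := by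
        nth_rw 2 [← norm_smul_direction hm]
        rw [suppFn_smul (norm_nonneg _), ← mul_sub, abs_mul, abs_norm]
    _ ≤ ‖ek m‖ * (2 ^ (n + 1) * depthUnit R m) := by gcongr
    _ = 2 ^ (n + 1) / R := by
        rw [mul_left_comm, norm_ek_mul_depthUnit hm, mul_one_div]

/-- The part of the second difference of slice lengths in direction `m/|m|` at depth at least
`r₁/2` below both support lines. -/
def middlePart (r₁ R : ℝ) (Ω : Set E2) (m : Fin 2 → ℤ) : ℝ → ℝ :=
  depthPart Ω (direction m) (r₁ / 8 * depthUnit R m)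
    (Icc (r₁ / 2) (suppFn Ω (direction m) + suppFn Ω (-direction m) - r₁ / 2))

lemma norm_realFourierInv_middlePart_le (h : PinchedDomain r₁ r₂ Ω) (hR : 1 ≤ R) (hm : m ≠ 0)
    (ξ : ℝ) : ‖realFourierInv (middlePart r₁ R Ω m) ξ‖ ≤ r₂ * depthUnit R m ^ 2 := by
  have hr₁ := h.pos
  have hδ := depthUnit_pos (zero_lt_one.trans_le hR) hm
  have hδ1 := depthUnit_le_one hR hm
  have hint := integral_abs_depthPart_Icc_le h.convex h.isOpen ⟨0, h.zero_mem⟩ (norm_direction hm)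
    h.radius_nonneg h.subset_closedBall (τ := r₁ / 8 * depthUnit R m) (q := r₁ / 2)
    (by positivity) (by nlinarith) (by linarith [h.two_mul_le_width (norm_direction hm)])
  calc ‖realFourierInv (middlePart r₁ R Ω m) ξ‖ ≤ ∫ s, |middlePart r₁ R Ω m s| :=
        norm_realFourierInv_le _ _
    _ ≤ 4 * (r₁ / 8 * depthUnit R m) ^ 2 * (2 * r₂) / (r₁ / 2) := hint
    _ = r₁ / 4 * (r₂ * depthUnit R m ^ 2) := by field_simp; norm_num
    _ ≤ r₂ * depthUnit R m ^ 2 :=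
        mul_le_of_le_one_left (mul_nonneg h.radius_nonneg (by positivity)) (by linarith [h.le_one])

/-- The step `r₁/(8|m|R)` is chosen so that the multiplier does not depend on `m`. -/
lemma multiplier_mul_domainTransform (h : PinchedDomain r₁ r₂ Ω) (hR : 0 < R)
    (hm : m ∈ frequencies R) {K : ℕ} (hK : R ^ 3 ≤ 2 ^ (K + 1)) (s : ℝ) :
    ((2 * Real.cos (2 * Real.pi * (s * (r₁ / 8 / R))) - 2 : ℝ) : ℂ) * domainTransform Ω (s • ek m)
      = ∑ n ∈ Finset.range (K + 1), realFourierInv (zonePart r₁ R Ω n m) (‖ek m‖ * s)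
        + (realFourierInv (middlePart r₁ R Ω m) (‖ek m‖ * s)
          + (starRingEnd ℂ) (∑ n ∈ Finset.range (K + 1),
            realFourierInv (zonePart r₁ R Ω n (-m)) (‖ek m‖ * s))) := by
  obtain ⟨hm0, hmle⟩ := mem_frequencies.1 hm
  have hθ := norm_direction hm0
  have hpos := norm_ek_pos hm0
  have hdepth : r₁ / 2 ≤ 2 ^ (K + 1) * depthUnit R m := by
    have hprod : ‖ek m‖ * R ≤ 2 ^ (K + 1) := by nlinarith
    have : 1 ≤ 2 ^ (K + 1) * depthUnit R m := by
      rw [depthUnit, mul_one_div]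
      exact (one_le_div (by positivity)).2 hprod
    linarith [h.le_one]
  have hphase : s * (r₁ / 8 / R) = ‖ek m‖ * s * (r₁ / 8 * depthUnit R m) := by
    rw [depthUnit]
    field_simp
  have htransform : domainTransform Ω (s • ek m)
      = realFourierInv (sliceLength Ω (direction m)) (‖ek m‖ * s) := by
    rw [← domainTransform_smul h.isOpen.measurableSet h.volume_ne_top hθ, mul_comm, mul_smul,
      norm_smul_direction hm0]
  have hneg (n : ℕ) : zonePart r₁ R Ω n (-m) = depthPart Ω (-direction m) (r₁ / 8 * depthUnit R m)
      (depthZone (r₁ / 2) (depthUnit R m) n) := by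
    rw [zonePart, direction_neg, depthUnit, depthUnit, norm_ek_neg]
  have hint := integrable_sliceLength h.isOpen.measurableSet h.volume_ne_top hθ
  simp only [hneg]
  rw [hphase, htransform, ← realFourierInv_secondDiff hint]
  exact realFourierInv_secondDiff_sliceLength h.isOpen.measurableSet h.volume_ne_top hθ
    (by linarith [h.two_mul_le_width hθ, h.pos]) (depthUnit_pos hR hm0).le hdepth _ _

lemma sq_le_mul_abs_multiplier {s σ : ℝ} (hσ : 0 < σ) (hσ1 : σ ≤ 1 / 8) (hR : 0 < R) (hs : 0 ≤ s)
    (hsR : s ≤ 3 * R) :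
    s ^ 2 ≤ R ^ 2 / (16 * σ ^ 2) * |2 * Real.cos (2 * Real.pi * (s * (σ / R))) - 2| := by
  have hquarter : s * (σ / R) ≤ 3 / 8 := by
    rw [← mul_div_assoc, div_le_iff₀ hR]
    nlinarith
  have harg : |2 * Real.pi * (s * (σ / R))| ≤ Real.pi := by
    rw [abs_of_nonneg (by positivity)]
    nlinarith [Real.pi_pos]
  have hcos := Real.cos_le_one_sub_mul_cos_sq harg
  have hsquare : 2 / Real.pi ^ 2 * (2 * Real.pi * (s * (σ / R))) ^ 2
      = 8 * σ ^ 2 / R ^ 2 * s ^ 2 := by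
    field_simp
    ring
  calc s ^ 2 = R ^ 2 / (16 * σ ^ 2) * (2 * (8 * σ ^ 2 / R ^ 2 * s ^ 2)) := by
        field_simp
        ring
    _ ≤ R ^ 2 / (16 * σ ^ 2) * -(2 * Real.cos (2 * Real.pi * (s * (σ / R))) - 2) := by
        gcongr
        linarith
    _ ≤ R ^ 2 / (16 * σ ^ 2) * |2 * Real.cos (2 * Real.pi * (s * (σ / R))) - 2| := by
        gcongr
        exact neg_le_abs _

/-- The contribution of the `n`-th dyadic depth zones of all directions to the Fourier series of
the smoothed rest with coefficients `c`. -/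
def zoneSum (r₁ R : ℝ) (Ω : Set E2) (c : (Fin 2 → ℤ) → ℂ) (n : ℕ) (t : ℝ) : ℂ :=
  ∑ m ∈ frequencies R, c m * realFourierInv (zonePart r₁ R Ω n m) (‖ek m‖ * t)

variable {c : (Fin 2 → ℤ) → ℂ} {s C : ℝ}

lemma continuous_zoneSum (h : PinchedDomain r₁ r₂ Ω) (n : ℕ) :
    Continuous (zoneSum r₁ R Ω c n) := by
  unfold zoneSum
  exact continuous_finsetSum _ fun m _ => continuous_const.mul
    ((continuous_realFourierInv (integrable_zonePart h n m)).comp (by fun_prop))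

/-- Replacing `m` by `-m` turns the zones near the opposite support lines into conjugates. -/
lemma multiplier_mul_sum_domainTransform (h : PinchedDomain r₁ r₂ Ω) (hR : 0 < R)
    (hc : ∀ m, c (-m) = (starRingEnd ℂ) (c m)) {K : ℕ} (hK : R ^ 3 ≤ 2 ^ (K + 1)) (s : ℝ) :
    ((2 * Real.cos (2 * Real.pi * (s * (r₁ / 8 / R))) - 2 : ℝ) : ℂ)
        * ∑ m ∈ frequencies R, c m * domainTransform Ω (s • ek m)
      = ∑ n ∈ Finset.range (K + 1), zoneSum r₁ R Ω c n s
        + (∑ m ∈ frequencies R, c m * realFourierInv (middlePart r₁ R Ω m) (‖ek m‖ * s)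
          + (starRingEnd ℂ) (∑ n ∈ Finset.range (K + 1), zoneSum r₁ R Ω c n s)) := by
  let zones (m : Fin 2 → ℤ) : ℂ :=
    ∑ n ∈ Finset.range (K + 1), realFourierInv (zonePart r₁ R Ω n m) (‖ek m‖ * s)
  have hswap : ∑ n ∈ Finset.range (K + 1), zoneSum r₁ R Ω c n s
      = ∑ m ∈ frequencies R, c m * zones m := by
    simp only [zoneSum, zones, Finset.mul_sum]
    exact Finset.sum_comm
  have hconj : (starRingEnd ℂ) (∑ m ∈ frequencies R, c m * zones m)
      = ∑ m ∈ frequencies R, c m * (starRingEnd ℂ) (zones (-m)) := by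
    rw [← sum_frequencies_neg, map_sum]
    simp only [map_mul, ← hc, neg_neg]
  rw [hswap, hconj, Finset.mul_sum, ← Finset.sum_add_distrib, ← Finset.sum_add_distrib]
  refine Finset.sum_congr rfl fun m hm => ?_
  rw [mul_left_comm, multiplier_mul_domainTransform h hR hm hK]
  simp only [zones, norm_ek_neg]
  ring

lemma norm_sum_middlePart_le (h : PinchedDomain r₁ r₂ Ω) (hR : 1 ≤ R) (hc : ∀ m, ‖c m‖ ≤ C)
    (s : ℝ) : ‖∑ m ∈ frequencies R, c m * realFourierInv (middlePart r₁ R Ω m) (‖ek m‖ * s)‖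
      ≤ C * r₂ / R ^ 2 * ∑ m ∈ frequencies R, (‖ek m‖ ^ 2)⁻¹ := by
  rw [Finset.mul_sum]
  refine (norm_sum_le _ _).trans (Finset.sum_le_sum fun m hm => ?_)
  have hm0 := (mem_frequencies.1 hm).1
  have hC : 0 ≤ C := (norm_nonneg _).trans (hc m)
  calc ‖c m * realFourierInv (middlePart r₁ R Ω m) (‖ek m‖ * s)‖
      ≤ C * (r₂ * depthUnit R m ^ 2) := by
        rw [norm_mul]
        gcongr
        · exact hc m
        · exact norm_realFourierInv_middlePart_le h hR hm0 _
    _ = C * r₂ / R ^ 2 * (‖ek m‖ ^ 2)⁻¹ := by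
        rw [depthUnit]
        field_simp

lemma norm_sum_domainTransform_le (h : PinchedDomain r₁ r₂ Ω) (hR : 1 ≤ R) (hC : ∀ m, ‖c m‖ ≤ C)
    (hc : ∀ m, c (-m) = (starRingEnd ℂ) (c m)) (hs : 0 ≤ s) (hsR : s ≤ 3 * R) {K : ℕ}
    (hK : R ^ 3 ≤ 2 ^ (K + 1)) :
    s ^ 2 * ‖∑ m ∈ frequencies R, c m * domainTransform Ω (s • ek m)‖
      ≤ 4 * R ^ 2 / r₁ ^ 2 * (2 * ∑ n ∈ Finset.range (K + 1), ‖zoneSum r₁ R Ω c n s‖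
        + C * r₂ / R ^ 2 * ∑ m ∈ frequencies R, (‖ek m‖ ^ 2)⁻¹) := by
  have hr₁ := h.pos
  have hR0 : 0 < R := by linarith
  set X : ℂ := ∑ m ∈ frequencies R, c m * domainTransform Ω (s • ek m)
  set w : ℝ := 2 * Real.cos (2 * Real.pi * (s * (r₁ / 8 / R))) - 2 with hw
  have hmult : s ^ 2 ≤ 4 * R ^ 2 / r₁ ^ 2 * |w| := by
    refine (sq_le_mul_abs_multiplier (σ := r₁ / 8) (by positivity) (by linarith [h.le_one]) hR0 hs
      hsR).trans_eq ?_
    rw [hw]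
    field_simp
    ring
  have hzones : ‖∑ n ∈ Finset.range (K + 1), zoneSum r₁ R Ω c n s‖
      ≤ ∑ n ∈ Finset.range (K + 1), ‖zoneSum r₁ R Ω c n s‖ := norm_sum_le _ _
  have hnorm : |w| * ‖X‖ ≤ 2 * ∑ n ∈ Finset.range (K + 1), ‖zoneSum r₁ R Ω c n s‖
      + C * r₂ / R ^ 2 * ∑ m ∈ frequencies R, (‖ek m‖ ^ 2)⁻¹ := by
    rw [← Real.norm_eq_abs, ← Complex.norm_real, ← norm_mul,
      multiplier_mul_sum_domainTransform h hR0 hc hK]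
    refine norm_add_le_of_le hzones (norm_add_le_of_le (norm_sum_middlePart_le h hR hC s)
      ((Complex.norm_conj _).trans_le hzones)) |>.trans_eq ?_
    ring
  calc s ^ 2 * ‖X‖ ≤ 4 * R ^ 2 / r₁ ^ 2 * |w| * ‖X‖ := by gcongr
    _ = 4 * R ^ 2 / r₁ ^ 2 * (|w| * ‖X‖) := mul_assoc _ _ _
    _ ≤ _ := by gcongr

end

/-! ### Quadratic means of the zone sums -/

section

/-- The quadratic mean of `f` over `[a, a + h]`. -/
def quadraticMean (a h : ℝ) (f : ℝ → ℝ) : ℝ := √((1 / h) * ∫ t in a..(a + h), f t ^ 2)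

lemma quadraticMean_const {a h c : ℝ} (hh : 0 < h) (hc : 0 ≤ c) :
    quadraticMean a h (fun _ => c) = c := by
  rw [quadraticMean, intervalIntegral.integral_const, add_sub_cancel_left, smul_eq_mul,
    ← mul_assoc, one_div_mul_cancel hh.ne', one_mul, Real.sqrt_sq hc]

lemma quadraticMean_comp_add_right (a h e : ℝ) (g : ℝ → ℝ) :
    quadraticMean a h (fun t => g (t + e)) = quadraticMean (a + e) h g := by
  rw [quadraticMean, intervalIntegral.integral_comp_add_right (fun t => g t ^ 2), quadraticMean,
    add_right_comm]

lemma quadraticMean_const_mul {a h b : ℝ} (hb : 0 ≤ b) (g : ℝ → ℝ) :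
    quadraticMean a h (fun t => b * g t) = b * quadraticMean a h g := by
  simp only [quadraticMean, mul_pow]
  rw [intervalIntegral.integral_const_mul, mul_left_comm, Real.sqrt_mul (sq_nonneg b),
    Real.sqrt_sq hb]

lemma quadraticMean_mono {a h : ℝ} (hh : 0 < h) {f g : ℝ → ℝ} (hg : Continuous g)
    (hfg : ∀ t ∈ Icc a (a + h), |f t| ≤ g t) : quadraticMean a h f ≤ quadraticMean a h g := by
  have hle : a ≤ a + h := by linarith
  unfold quadraticMean
  gcongr
  rw [intervalIntegral.integral_of_le hle, intervalIntegral.integral_of_le hle]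
  refine integral_mono_of_nonneg (.of_forall fun t => sq_nonneg _)
    (hg.pow 2).integrableOn_Ioc ?_
  filter_upwards [ae_restrict_mem measurableSet_Ioc] with t ht
  exact sq_le_sq' (neg_le_of_abs_le (hfg t (Ioc_subset_Icc_self ht)))
    (le_of_abs_le (hfg t (Ioc_subset_Icc_self ht)))

lemma quadraticMean_eq_mul_lpNorm {a h : ℝ} (hh : 0 < h) {f : ℝ → ℝ} (hf : Continuous f) :
    quadraticMean a h f = √(1 / h) * lpNorm f 2 (volume.restrict (Ioc a (a + h))) := by
  rw [lpNorm_eq_integral_norm_rpow_toReal two_ne_zero ENNReal.ofNat_ne_top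
    hf.aestronglyMeasurable, quadraticMean, Real.sqrt_mul (by positivity),
    intervalIntegral.integral_of_le (by linarith), Real.sqrt_eq_rpow (∫ t in _, _)]
  simp

lemma quadraticMean_le_sum_add {ι : Type*} {a h c : ℝ} (hh : 0 < h) (hc : 0 ≤ c) {E : ℝ → ℝ}
    {F : Finset ι} {f : ι → ℝ → ℝ} (hf : ∀ i, Continuous (f i))
    (hE : ∀ t ∈ Icc a (a + h), |E t| ≤ ∑ i ∈ F, f i t + c) :
    quadraticMean a h E ≤ ∑ i ∈ F, quadraticMean a h (f i) + c := by
  let μ : Measure ℝ := volume.restrict (Ioc a (a + h))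
  have hmem (i : ι) : MemLp (f i) 2 μ :=
    (memLp_two_iff_integrable_sq (hf i).aestronglyMeasurable).2 ((hf i).pow 2).integrableOn_Ioc
  have hsum : MemLp (∑ i ∈ F, f i) 2 μ := memLp_finsetSum' _ fun i _ => hmem i
  have hcont : Continuous (∑ i ∈ F, f i + fun _ => c) :=
    (Finset.sum_induction _ _ (fun _ _ => Continuous.add) continuous_zero fun i _ => hf i).add
      continuous_const
  calc quadraticMean a h E ≤ quadraticMean a h (∑ i ∈ F, f i + fun _ => c) :=
        quadraticMean_mono hh hcont (by simpa using hE)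
    _ = √(1 / h) * lpNorm (∑ i ∈ F, f i + fun _ => c) 2 μ := quadraticMean_eq_mul_lpNorm hh hcont
    _ ≤ √(1 / h) * (∑ i ∈ F, lpNorm (f i) 2 μ + lpNorm (fun _ => c) 2 μ) := by
        gcongr
        exact (lpNorm_add_le hsum one_le_two).trans
          (by gcongr; exact lpNorm_sum_le (fun i _ => hmem i) one_le_two)
    _ = ∑ i ∈ F, quadraticMean a h (f i) + c := by
        rw [mul_add, Finset.mul_sum, ← quadraticMean_eq_mul_lpNorm hh continuous_const,
          quadraticMean_const hh hc]
        simp only [quadraticMean_eq_mul_lpNorm hh (hf _), μ]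

variable {Ω : Set E2} {N : ℕ} {r₁ r₂ R h β C₀ : ℝ} {c : (Fin 2 → ℤ) → ℂ}

/-- The common form of `𝔅_n` and `𝔅̃_n`: the parameter `β` multiplies `|ρ*(k) - ρ*(ℓ)|` in the
decay factor, and the sum is finite. -/
def zoneNorm (Ω : Set E2) (N : ℕ) (R β : ℝ) (n : ℕ) : ℝ :=
  2 ^ (-(n : ℝ)) * R * √(∑ k ∈ frequencies R, ∑ l ∈ frequencies R,
    capWeight Ω N R n k * capWeight Ω N R n l *
      (1 + β * |suppFn Ω (ek k) - suppFn Ω (ek l)|) ^ (-(N : ℝ)))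

lemma Bn_eq_zoneNorm (hR : 0 < R) (n : ℕ) : Bn Ω N 1 R β n = zoneNorm Ω N R β n := by
  have hne {k : Fin 2 → ℤ} (hk : (2 : ℝ) ^ n / R < ‖ek k‖) : k ≠ 0 := by
    rintro rfl
    rw [ek_zero, norm_zero] at hk
    exact hk.not_ge (by positivity)
  unfold Bn zoneNorm
  congr 2
  rw [← Finset.sum_product', tsum_eq_sum (s := frequencies R ×ˢ frequencies R)]
  · refine Finset.sum_congr rfl fun p hp => ?_
    obtain ⟨h₁, h₂⟩ := Finset.mem_product.1 hp
    have hle₁ := (mem_frequencies.1 h₁).2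
    have hle₂ := (mem_frequencies.1 h₂).2
    simp only [hle₁, hle₂, one_smul, capWeight, true_and, ite_and]
    split_ifs
    · ring
    all_goals simp
  · intro p hp
    refine if_neg fun ⟨hk, hkle, hl, hlle⟩ => hp (Finset.mem_product.2 ?_)
    exact ⟨mem_frequencies.2 ⟨hne hk, hkle⟩, mem_frequencies.2 ⟨hne hl, hlle⟩⟩

lemma Bnt_eq_zoneNorm (hR : 0 < R) (n : ℕ) :
    Bnt Ω N 1 R h n = zoneNorm Ω N R (R * 2 ^ (-(n : ℝ))) n :=
  Bn_eq_zoneNorm hR n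

lemma norm_mul_integral_abs_zonePart_le (hΩ : PinchedDomain r₁ r₂ Ω) (hR : 2 ≤ R)
    (hc : ∀ m, ‖c m‖ ≤ C₀ * omegaR N R (ek m)) (hC₀ : 0 ≤ C₀) (n : ℕ) (m : Fin 2 → ℤ) :
    ‖c m‖ * ∫ s, |zonePart r₁ R Ω n m s| ≤ C₀ * (36 / (2 ^ n * R)) * capWeight Ω N R n m := by
  calc ‖c m‖ * ∫ s, |zonePart r₁ R Ω n m s|
      ≤ C₀ * omegaR N R (ek m) * ∫ s, |zonePart r₁ R Ω n m s| := by gcongr; exact hc m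
    _ ≤ C₀ * (36 / (2 ^ n * R) * capWeight Ω N R n m) := by
        rw [mul_assoc]
        refine mul_le_mul_of_nonneg_left ?_ hC₀
        exact omegaR_mul_integral_abs_zonePart_le hΩ N hR n m
    _ = C₀ * (36 / (2 ^ n * R)) * capWeight Ω N R n m := (mul_assoc _ _ _).symm

lemma norm_zoneSum_le (hΩ : PinchedDomain r₁ r₂ Ω) (hN : 2 ≤ N) (hR : 2 ≤ R)
    (hc : ∀ m, ‖c m‖ ≤ C₀ * omegaR N R (ek m)) (hC₀ : 0 ≤ C₀) (n : ℕ) (t : ℝ) :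
    ‖zoneSum r₁ R Ω c n t‖ ≤ 36 * C₀ / R ^ 2 * Gam Ω N R n := by
  have hR0 : 0 < R := by linarith
  have hterm (m : Fin 2 → ℤ) : ‖c m * realFourierInv (zonePart r₁ R Ω n m) (‖ek m‖ * t)‖
      ≤ C₀ * (36 / (2 ^ n * R)) * capWeight Ω N R n m := by
    rw [norm_mul]
    refine le_trans ?_ (norm_mul_integral_abs_zonePart_le hΩ hR hc hC₀ n m)
    gcongr
    exact norm_realFourierInv_le _ _
  have hnonneg := capWeight_nonneg (Ω := Ω) (N := N) hR0 n
  calc ‖zoneSum r₁ R Ω c n t‖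
      ≤ ∑ m ∈ frequencies R, C₀ * (36 / (2 ^ n * R)) * capWeight Ω N R n m :=
        (norm_sum_le _ _).trans (Finset.sum_le_sum fun m _ => hterm m)
    _ ≤ C₀ * (36 / (1 * R)) * ∑' m, capWeight Ω N R n m := by
        rw [← Finset.mul_sum]
        gcongr
        · exact Finset.sum_nonneg fun m _ => hnonneg m
        · exact one_le_pow₀ one_le_two
        · exact (summable_capWeight hΩ.isBounded hN hR0 n).sum_le_tsum _ fun m _ => hnonneg m
    _ = 36 * C₀ / R ^ 2 * Gam Ω N R n := by
        rw [Gam_eq]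
        field_simp

lemma zoneNorm_nonneg (hR : 0 ≤ R) (n : ℕ) : 0 ≤ zoneNorm Ω N R β n := by
  unfold zoneNorm
  positivity

lemma zoneNorm_sq (hR : 0 < R) (hβ : 0 ≤ β) (n : ℕ) : zoneNorm Ω N R β n ^ 2
    = (R / 2 ^ n) ^ 2 * ∑ k ∈ frequencies R, ∑ l ∈ frequencies R,
      capWeight Ω N R n k * capWeight Ω N R n l
        * (1 + β * |suppFn Ω (ek k) - suppFn Ω (ek l)|) ^ (-(N : ℝ)) := by
  have hnonneg := capWeight_nonneg (Ω := Ω) (N := N) hR n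
  rw [zoneNorm, mul_pow, Real.sq_sqrt, Real.rpow_neg zero_le_two, Real.rpow_natCast,
    inv_mul_eq_div]
  exact Finset.sum_nonneg fun k _ => Finset.sum_nonneg fun l _ =>
    mul_nonneg (mul_nonneg (hnonneg k) (hnonneg l)) (by positivity)

lemma sum_sum_norm_mul_integral_le (hΩ : PinchedDomain r₁ r₂ Ω) (hR : 2 ≤ R) (hβ : 0 ≤ β)
    (hc : ∀ m, ‖c m‖ ≤ C₀ * omegaR N R (ek m)) (hC₀ : 0 ≤ C₀) (n : ℕ) :
    ∑ k ∈ frequencies R, ∑ l ∈ frequencies R, ‖c k‖ * ‖c l‖ *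
        ((∫ s, |zonePart r₁ R Ω n k s|) * (∫ s, |zonePart r₁ R Ω n l s|) *
          (1 + β * |suppFn Ω (ek k) - suppFn Ω (ek l)|) ^ (-(N : ℝ)))
      ≤ (36 * C₀ / R ^ 2 * zoneNorm Ω N R β n) ^ 2 := by
  have hR0 : 0 < R := by linarith
  let q : ℝ := C₀ * (36 / (2 ^ n * R))
  have hterm (k : Fin 2 → ℤ) := norm_mul_integral_abs_zonePart_le hΩ hR hc hC₀ n k
  have hterm0 (k : Fin 2 → ℤ) : 0 ≤ ‖c k‖ * ∫ s, |zonePart r₁ R Ω n k s| := by positivity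
  calc _ ≤ ∑ k ∈ frequencies R, ∑ l ∈ frequencies R, q ^ 2 *
        (capWeight Ω N R n k * capWeight Ω N R n l *
          (1 + β * |suppFn Ω (ek k) - suppFn Ω (ek l)|) ^ (-(N : ℝ))) := by
        refine Finset.sum_le_sum fun k _ => Finset.sum_le_sum fun l _ => ?_
        linarith [mul_le_mul_of_nonneg_right
          (mul_le_mul (hterm k) (hterm l) (hterm0 l) ((hterm0 k).trans (hterm k)))
          (by positivity : 0 ≤ (1 + β * |suppFn Ω (ek k) - suppFn Ω (ek l)|) ^ (-(N : ℝ)))]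
    _ = (36 * C₀ / R ^ 2 * zoneNorm Ω N R β n) ^ 2 := by
        simp only [← Finset.mul_sum]
        rw [mul_pow _ (zoneNorm _ _ _ _ _), zoneNorm_sq hR0 hβ, ← mul_assoc]
        congr 1
        simp only [q]
        field_simp

lemma exists_quadraticMean_zoneSum_le (N : ℕ) : ∃ C : ℝ, 0 < C ∧ ∀ {Ω : Set E2}
    {r₁ r₂ R h β C₀ a : ℝ} {c : (Fin 2 → ℤ) → ℂ} {n : ℕ}, PinchedDomain r₁ r₂ Ω → 2 ≤ R → 0 < h →
    0 ≤ β → β ≤ h → 2 ^ n * β ≤ R → (∀ m, ‖c m‖ ≤ C₀ * omegaR N R (ek m)) → 0 ≤ C₀ →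
    |a - R| ≤ h / 2 →
    quadraticMean a h (fun t => ‖zoneSum r₁ R Ω c n t‖) ≤ C * C₀ / R ^ 2 * zoneNorm Ω N R β n := by
  obtain ⟨C, hC, H⟩ := exists_meanSquare_sum_realFourierInv_le N
  refine ⟨√C * 36, by positivity, fun {Ω r₁ r₂ R h β C₀ a c n} hΩ hR hh hβ hβh hβn hc hC₀ ha => ?_⟩
  have hR0 : 0 < R := by linarith
  obtain ⟨ha₁, ha₂⟩ := abs_le.1 ha
  have hspread : 2 ^ (n + 1) / R * β ≤ 2 := by
    rw [div_mul_eq_mul_div, div_le_iff₀ hR0, pow_succ]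
    linarith
  have hmean := H (frequencies R) c hh hβ hβh hspread (integrable_zonePart hΩ n)
    (fun m s => abs_norm_ek_mul_sub_suppFn_le hΩ hR0) (T₀ := a) (T₁ := a + h) (R := R)
    (by linarith) (by linarith) (by linarith)
  refine Real.sqrt_le_iff.2 ⟨mul_nonneg (by positivity) (zoneNorm_nonneg hR0.le n), ?_⟩
  calc _ ≤ C * (36 * C₀ / R ^ 2 * zoneNorm Ω N R β n) ^ 2 := hmean.trans
        (mul_le_mul_of_nonneg_left (sum_sum_norm_mul_integral_le hΩ hR hβ hc hC₀ n) hC.le)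
    _ = (√C * 36 * C₀ / R ^ 2 * zoneNorm Ω N R β n) ^ 2 := by
        simp only [mul_assoc, mul_div_assoc, mul_pow √C, Real.sq_sqrt hC.le]

end

/-! ### Collecting the zones -/

section

variable {Ω : Set E2} {f P : E2 → ℝ} {c : (Fin 2 → ℤ) → ℂ} {N : ℕ} {r₁ r₂ R h C₀ t : ℝ}

/-- The rest of the lattice count smoothed by a mollifier with periodization `P`. -/
def smoothedRest (Ω : Set E2) (P : E2 → ℝ) (s : ℝ) : ℝ :=
  (∫ y in s • Ω, P y) - s ^ 2 * volume.real Ω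

lemma norm_le_of_norm_le_inv_pow {M M' : ℕ} (hR : 0 < R) (hC₀ : 0 ≤ C₀) (hM : M' ≤ M)
    (hc : ∀ m, ‖c m‖ ≤ C₀ * ((1 + ‖ek m‖ / R) ^ M)⁻¹) (m : Fin 2 → ℤ) :
    ‖c m‖ ≤ C₀ * ((1 + ‖ek m‖ / R) ^ M')⁻¹ := by
  refine (hc m).trans ?_
  gcongr
  exact le_add_of_nonneg_right (by positivity)

lemma norm_smoothedRest_sub_le (hΩ : PinchedDomain r₁ r₂ Ω) {r s : ℝ}
    (hP : PeriodizedMollifier ek r f P c) (hR : 0 < R) (hC₀ : 0 ≤ C₀)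
    (hc : ∀ m, ‖c m‖ ≤ C₀ * ((1 + ‖ek m‖ / R) ^ 8)⁻¹) (hs : 0 < s) (hsR : s ≤ 3 * R) :
    ‖smoothedRest Ω P s - (s : ℂ) ^ 2 * ∑ m ∈ frequencies R, c m * domainTransform Ω (s • ek m)‖
      ≤ 9 * C₀ * volume.real (Metric.closedBall (0 : E2) r₂) * ∑' m, ‖ek m‖ ^ (-3 : ℝ) := by
  have hterm (m : Fin 2 → ℤ) : ‖c m * ((s : ℂ) ^ 2 * domainTransform Ω (s • ek m))‖
      ≤ 9 * C₀ * volume.real (Metric.closedBall (0 : E2) r₂)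
        * (R ^ 2 * ((1 + ‖ek m‖ / R) ^ 8)⁻¹) := by
    rw [norm_mul, norm_mul, norm_pow, Complex.norm_real, Real.norm_of_nonneg hs.le]
    calc _ ≤ C₀ * ((1 + ‖ek m‖ / R) ^ 8)⁻¹
          * ((3 * R) ^ 2 * volume.real (Metric.closedBall (0 : E2) r₂)) := by
          gcongr
          exacts [hc m, (norm_domainTransform_le _).trans hΩ.volume_le]
      _ = _ := by ring
  have htail := norm_sub_sum_frequencies_le hR (by positivity)
    (hP.hasSum_setIntegral_sub_volume hΩ.isBounded hs) hterm
  simpa only [smoothedRest, Finset.mul_sum, mul_left_comm] using htail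

lemma exists_abs_smoothedRest_le (r₁ r₂ : ℝ) : ∃ A : ℝ, 0 ≤ A ∧ ∀ {Ω : Set E2} {f P : E2 → ℝ}
    {c : (Fin 2 → ℤ) → ℂ} {r R C₀ s : ℝ} {K : ℕ}, PinchedDomain r₁ r₂ Ω →
    PeriodizedMollifier ek r f P c → 2 ≤ R → 0 ≤ C₀ →
    (∀ m, ‖c m‖ ≤ C₀ * ((1 + ‖ek m‖ / R) ^ 8)⁻¹) → 0 < s → s ≤ 3 * R → R ^ 3 ≤ 2 ^ (K + 1) →
    |smoothedRest Ω P s| ≤ ∑ n ∈ Finset.range (K + 1), 8 * R ^ 2 / r₁ ^ 2 * ‖zoneSum r₁ R Ω c n s‖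
      + A * C₀ * Real.log R := by
  let V := volume.real (Metric.closedBall (0 : E2) r₂)
  let S := ∑' m : Fin 2 → ℤ, ‖ek m‖ ^ (-3 : ℝ)
  have : 0 ≤ S := tsum_nonneg fun m => by positivity
  refine ⟨128 * |r₂| / r₁ ^ 2 + 18 * V * S, by positivity,
    fun {Ω f P c r R C₀ s K} hΩ hP hR hC₀ hc hs hsR hK => ?_⟩
  have hR0 : 0 < R := by linarith
  have hr₁ := hΩ.pos
  have hlog : 1 / 2 ≤ Real.log R := half_le_log hR
  let X : ℂ := ∑ m ∈ frequencies R, c m * domainTransform Ω (s • ek m)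
  have hmain := norm_sum_domainTransform_le hΩ (by linarith)
    (fun m => by simpa using norm_le_of_norm_le_inv_pow hR0 hC₀ (Nat.zero_le 8) hc m)
    hP.coeff_neg hs.le hsR hK
  have hsum := sum_inv_norm_ek_sq_le_log hR fun m => (mem_frequencies (R := R) (m := m)).1
  calc |smoothedRest Ω P s| ≤ s ^ 2 * ‖X‖ + 9 * C₀ * V * S := by
        have hsplit := (norm_sub_norm_le (smoothedRest Ω P s : ℂ) (s ^ 2 * X)).trans
          (norm_smoothedRest_sub_le hΩ hP hR0 hC₀ hc hs hsR)
        rw [Complex.norm_real, Real.norm_eq_abs, norm_mul, norm_pow, Complex.norm_real,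
          Real.norm_of_nonneg hs.le] at hsplit
        linarith
    _ ≤ 4 * R ^ 2 / r₁ ^ 2 * (2 * ∑ n ∈ Finset.range (K + 1), ‖zoneSum r₁ R Ω c n s‖
          + C₀ * |r₂| / R ^ 2 * (32 * Real.log R)) + 9 * C₀ * V * S * (2 * Real.log R) := by
        refine add_le_add (hmain.trans ?_) (le_mul_of_one_le_right (by positivity) (by linarith))
        gcongr
        exact le_abs_self r₂
    _ = ∑ n ∈ Finset.range (K + 1), 8 * R ^ 2 / r₁ ^ 2 * ‖zoneSum r₁ R Ω c n s‖
          + (128 * |r₂| / r₁ ^ 2 + 18 * V * S) * C₀ * Real.log R := by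
        rw [← Finset.mul_sum]
        field_simp
        ring

lemma abs_latticeRest_le (hΩ : PinchedDomain r₁ r₂ Ω) {δ : ℝ}
    (hP : PeriodizedMollifier ek (r₁ * δ) f P c) (hδ : 0 < δ) (ht : δ ≤ t) :
    |latticeRest Ω t| ≤ |smoothedRest Ω P (t + δ)| + |smoothedRest Ω P (t - δ)|
      + (2 * t * δ + δ ^ 2) * volume.real Ω := by
  have hupper := hP.latticeCount_le_setIntegral hΩ.convex hΩ.isOpen hΩ.isBounded hΩ.ball_subset
    (hδ.le.trans ht) hδ
  have hlower := hP.setIntegral_le_latticeCount hΩ.convex hΩ.isOpen hΩ.isBounded hΩ.ball_subset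
    (sub_nonneg.2 ht) hδ
  rw [sub_add_cancel] at hlower
  have harea : 0 ≤ δ ^ 2 * volume.real Ω := by positivity
  have hplus := le_abs_self (smoothedRest Ω P (t + δ))
  have hplus' := abs_nonneg (smoothedRest Ω P (t + δ))
  have hminus := neg_abs_le (smoothedRest Ω P (t - δ))
  have hminus' := abs_nonneg (smoothedRest Ω P (t - δ))
  have hplus_eq : smoothedRest Ω P (t + δ)
      = (∫ y in (t + δ) • Ω, P y) - (t + δ) ^ 2 * volume.real Ω := rfl
  have hminus_eq : smoothedRest Ω P (t - δ)
      = (∫ y in (t - δ) • Ω, P y) - (t - δ) ^ 2 * volume.real Ω := rfl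
  rw [latticeRest, ← Measure.real, abs_le]
  constructor <;> linarith

lemma Bn_nonneg (hR : 0 ≤ R) (s : ℝ) (n : ℕ) : 0 ≤ Bn Ω N s R h n := by
  unfold Bn
  positivity

lemma Bnt_nonneg (hR : 0 ≤ R) (s : ℝ) (n : ℕ) : 0 ≤ Bnt Ω N s R h n := by
  unfold Bnt
  positivity

/-- The part of the right-hand side of the discrepancy bound coming from the sign `s`. -/
def zoneBound (Ω : Set E2) (N : ℕ) (s R h : ℝ) : ℝ :=
  (∑' n : ℕ, if (2 : ℝ) ^ n ≤ R / h then Bn Ω N s R h n else 0) +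
    (∑' n : ℕ, if R / h < (2 : ℝ) ^ n ∧ (2 : ℝ) ^ n ≤ R then Bnt Ω N s R h n else 0) +
    (∑' n : ℕ, if R < (2 : ℝ) ^ n then Gam Ω N R n else 0)

/-- The contribution of the `n`-th zone to `zoneBound`. -/
def zoneTerm (Ω : Set E2) (N : ℕ) (s R h : ℝ) (n : ℕ) : ℝ :=
  (if (2 : ℝ) ^ n ≤ R / h then Bn Ω N s R h n else 0) +
    (if R / h < (2 : ℝ) ^ n ∧ (2 : ℝ) ^ n ≤ R then Bnt Ω N s R h n else 0) +
    (if R < (2 : ℝ) ^ n then Gam Ω N R n else 0)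

lemma zoneTerm_eq_Bn {s : ℝ} {n : ℕ} (hh : 1 ≤ h) (hR : 0 ≤ R) (hn : 2 ^ n ≤ R / h) :
    zoneTerm Ω N s R h n = Bn Ω N s R h n := by
  have hnR : 2 ^ n ≤ R := hn.trans (div_le_self hR hh)
  simp [zoneTerm, hn, hn.not_gt, hnR.not_gt]

lemma zoneTerm_eq_Bnt {s : ℝ} {n : ℕ} (hn : R / h < 2 ^ n) (hnR : 2 ^ n ≤ R) :
    zoneTerm Ω N s R h n = Bnt Ω N s R h n := by
  simp [zoneTerm, hn, hn.not_ge, hnR, hnR.not_gt]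

lemma zoneTerm_eq_Gam {s : ℝ} {n : ℕ} (hh : 1 ≤ h) (hR : 0 ≤ R) (hn : R < 2 ^ n) :
    zoneTerm Ω N s R h n = Gam Ω N R n := by
  have hnh : R / h < 2 ^ n := (div_le_self hR hh).trans_lt hn
  simp [zoneTerm, hn, hn.not_ge, hnh.not_ge]

lemma zoneBound_nonneg (hR : 0 < R) (s : ℝ) : 0 ≤ zoneBound Ω N s R h :=
  add_nonneg (add_nonneg (tsum_nonneg fun n => ite_nonneg (Bn_nonneg hR.le s n) le_rfl)
    (tsum_nonneg fun n => ite_nonneg (Bnt_nonneg hR.le s n) le_rfl))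
    (tsum_nonneg fun n => ite_nonneg (Gam_nonneg hR n) le_rfl)

lemma summable_ite_two_pow_le {p : ℕ → Prop} [DecidablePred p] {B : ℝ}
    (hp : ∀ n, p n → (2 : ℝ) ^ n ≤ B) (u : ℕ → ℝ) : Summable fun n => if p n then u n else 0 := by
  obtain ⟨K, hK⟩ := pow_unbounded_of_one_lt B one_lt_two
  refine summable_of_ne_finset_zero (s := Finset.range K) fun n hn => if_neg fun hpn => hn ?_
  exact Finset.mem_range.2 ((pow_lt_pow_iff_right₀ one_lt_two).1 ((hp n hpn).trans_lt hK))

lemma sum_zoneTerm_le (hbdd : Bornology.IsBounded Ω) (hN : 2 ≤ N) (hR : 0 < R) (s : ℝ)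
    (F : Finset ℕ) : ∑ n ∈ F, zoneTerm Ω N s R h n ≤ zoneBound Ω N s R h := by
  have hB := summable_ite_two_pow_le (p := fun n => (2 : ℝ) ^ n ≤ R / h) (fun n hn => hn)
    (Bn Ω N s R h)
  have hBt := summable_ite_two_pow_le (p := fun n => R / h < (2 : ℝ) ^ n ∧ (2 : ℝ) ^ n ≤ R)
    (fun n hn => hn.2) (Bnt Ω N s R h)
  have hG : Summable fun n => if R < (2 : ℝ) ^ n then Gam Ω N R n else 0 :=
    (summable_Gam hbdd hN hR).indicator {n | R < (2 : ℝ) ^ n}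
  simp only [zoneTerm, Finset.sum_add_distrib]
  refine add_le_add (add_le_add (hB.sum_le_tsum F fun n _ => ?_)
    (hBt.sum_le_tsum F fun n _ => ?_)) (hG.sum_le_tsum F fun n _ => ?_)
  exacts [ite_nonneg (Bn_nonneg hR.le s n) le_rfl, ite_nonneg (Bnt_nonneg hR.le s n) le_rfl,
    ite_nonneg (Gam_nonneg hR n) le_rfl]

lemma exists_quadraticMean_zoneSum_le_zoneTerm (hN : 2 ≤ N) : ∃ C : ℝ, 0 < C ∧ ∀ {Ω : Set E2}
    {r₁ r₂ R h C₀ a : ℝ} {c : (Fin 2 → ℤ) → ℂ}, PinchedDomain r₁ r₂ Ω → 2 ≤ R → 1 ≤ h →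
    (∀ m, ‖c m‖ ≤ C₀ * omegaR N R (ek m)) → 0 ≤ C₀ → |a - R| ≤ h / 2 → ∀ n : ℕ,
    quadraticMean a h (fun t => ‖zoneSum r₁ R Ω c n t‖)
      ≤ C * C₀ / R ^ 2 * zoneTerm Ω N 1 R h n := by
  obtain ⟨C, hC, H⟩ := exists_quadraticMean_zoneSum_le N
  refine ⟨C + 36, by positivity, fun {Ω r₁ r₂ R h C₀ a c} hΩ hR hh hc hC₀ ha n => ?_⟩
  have hR0 : 0 < R := by linarith
  have hh0 : 0 < h := by linarith
  have hCle : C ≤ C + 36 := by linarith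
  rcases le_or_gt ((2 : ℝ) ^ n) (R / h) with hsmall | hmid
  · rw [zoneTerm_eq_Bn hh hR0.le hsmall, Bn_eq_zoneNorm hR0]
    refine (H hΩ hR hh0 hh0.le le_rfl ((le_div_iff₀ hh0).1 hsmall) hc hC₀ ha).trans ?_
    gcongr
    exact zoneNorm_nonneg hR0.le n
  rcases le_or_gt ((2 : ℝ) ^ n) R with hle | hlarge
  · have hβ : R * (2 : ℝ) ^ (-(n : ℝ)) = R / 2 ^ n := by
      rw [Real.rpow_neg zero_le_two, Real.rpow_natCast, div_eq_mul_inv]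
    rw [zoneTerm_eq_Bnt hmid hle, Bnt_eq_zoneNorm hR0]
    refine (H hΩ hR hh0 (β := R * 2 ^ (-(n : ℝ))) (by positivity) ?_ ?_ hc hC₀ ha).trans ?_
    · rw [hβ, div_le_comm₀ (by positivity) hh0]
      exact hmid.le
    · rw [hβ, mul_div_cancel₀ R (by positivity)]
    · gcongr
      exact zoneNorm_nonneg hR0.le n
  · have hG := Gam_nonneg (Ω := Ω) (N := N) hR0 n
    calc quadraticMean a h (fun t => ‖zoneSum r₁ R Ω c n t‖)
        ≤ quadraticMean a h (fun _ => 36 * C₀ / R ^ 2 * Gam Ω N R n) :=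
          quadraticMean_mono hh0 continuous_const fun t _ => by
            rw [abs_norm]
            exact norm_zoneSum_le hΩ hN hR hc hC₀ n t
      _ = 36 * C₀ / R ^ 2 * Gam Ω N R n := quadraticMean_const hh0 (by positivity)
      _ ≤ (C + 36) * C₀ / R ^ 2 * zoneTerm Ω N 1 R h n := by
          rw [zoneTerm_eq_Gam hh hR0.le hlarge]
          gcongr
          linarith

lemma exists_abs_latticeRest_le_sum (r₁ r₂ : ℝ) : ∃ A : ℝ, 0 ≤ A ∧ ∀ {Ω : Set E2}
    {f P : E2 → ℝ} {c : (Fin 2 → ℤ) → ℂ} {R C₀ δ t : ℝ} {K : ℕ}, PinchedDomain r₁ r₂ Ω →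
    PeriodizedMollifier ek (r₁ * δ) f P c → 2 ≤ R → δ = 1 / (4 * R) → 0 ≤ C₀ →
    (∀ m, ‖c m‖ ≤ C₀ * ((1 + ‖ek m‖ / R) ^ 8)⁻¹) → R ^ 3 ≤ 2 ^ (K + 1) → R ≤ t → t ≤ 2 * R →
    |latticeRest Ω t| ≤ ∑ p ∈ Finset.range (K + 1) ×ˢ {δ, -δ},
        8 * R ^ 2 / r₁ ^ 2 * ‖zoneSum r₁ R Ω c p.1 (t + p.2)‖ + A * (C₀ + 1) * Real.log R := by
  obtain ⟨A, hA, H⟩ := exists_abs_smoothedRest_le r₁ r₂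
  let V := volume.real (Metric.closedBall (0 : E2) r₂)
  refine ⟨2 * A + 4 * V, by positivity,
    fun {Ω f P c R C₀ δ t K} hΩ hP hR hδ hC₀ hc hK ht htR => ?_⟩
  have : 0 < R := by linarith
  have hlog : 1 / 2 ≤ Real.log R := half_le_log hR
  have hδ0 : 0 < δ := by rw [hδ]; positivity
  have hδR : δ * R = 1 / 4 := by rw [hδ]; field_simp
  have hδ1 : δ ≤ 1 / 8 := by nlinarith
  have harea : (2 * t * δ + δ ^ 2) * volume.real Ω ≤ 4 * V * Real.log R := by
    have hcoeff : 2 * t * δ + δ ^ 2 ≤ 2 := by nlinarith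
    calc (2 * t * δ + δ ^ 2) * volume.real Ω ≤ 2 * V := by gcongr; exact hΩ.volume_le
      _ = 4 * V * (1 / 2) := by ring
      _ ≤ 4 * V * Real.log R := by gcongr
  have hne : δ ≠ -δ := by linarith
  have hplus := H hΩ hP hR hC₀ hc (s := t + δ) (by linarith) (by linarith) hK
  have hminus := H hΩ hP hR hC₀ hc (s := t - δ) (by linarith) (by linarith) hK
  calc |latticeRest Ω t| ≤ |smoothedRest Ω P (t + δ)| + |smoothedRest Ω P (t - δ)|
        + (2 * t * δ + δ ^ 2) * volume.real Ω := abs_latticeRest_le hΩ hP hδ0 (by linarith)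
    _ ≤ _ + _ + 4 * V * Real.log R := add_le_add (add_le_add hplus hminus) harea
    _ ≤ _ := by
        simp only [Finset.sum_product, Finset.sum_pair hne, Finset.sum_add_distrib,
          ← sub_eq_add_neg]
        linarith [mul_nonneg (by positivity : 0 ≤ 2 * A + 4 * V * C₀)
          (by linarith : 0 ≤ Real.log R)]

lemma exists_sum_quadraticMean_shift_le (hN : 2 ≤ N) : ∃ C : ℝ, 0 < C ∧ ∀ {Ω : Set E2}
    {r₁ r₂ R h C₀ δ : ℝ} {c : (Fin 2 → ℤ) → ℂ}, PinchedDomain r₁ r₂ Ω → 2 ≤ R → 1 ≤ h →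
    (∀ m, ‖c m‖ ≤ C₀ * omegaR N R (ek m)) → 0 ≤ C₀ → 0 < δ → δ ≤ h / 2 → ∀ K : ℕ,
    ∑ p ∈ Finset.range K ×ˢ {δ, -δ}, quadraticMean R h
        (fun t => 8 * R ^ 2 / r₁ ^ 2 * ‖zoneSum r₁ R Ω c p.1 (t + p.2)‖)
      ≤ C * C₀ / r₁ ^ 2 * zoneBound Ω N 1 R h := by
  obtain ⟨C, hC, H⟩ := exists_quadraticMean_zoneSum_le_zoneTerm hN
  refine ⟨16 * C, by positivity, fun {Ω r₁ r₂ R h C₀ δ c} hΩ hR hh hc hC₀ hδ hδh K => ?_⟩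
  have hR0 : 0 < R := by linarith
  have hshift (n : ℕ) {e : ℝ} (he : |e| = δ) :
      quadraticMean R h (fun t => 8 * R ^ 2 / r₁ ^ 2 * ‖zoneSum r₁ R Ω c n (t + e)‖)
        ≤ 8 * C * C₀ / r₁ ^ 2 * zoneTerm Ω N 1 R h n := by
    have hmean := H hΩ hR hh hc hC₀ (a := R + e) (by rwa [add_sub_cancel_left, he]) n
    rw [quadraticMean_const_mul (by positivity),
      quadraticMean_comp_add_right R h e fun t => ‖zoneSum r₁ R Ω c n t‖]
    refine (mul_le_mul_of_nonneg_left hmean (by positivity)).trans_eq ?_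
    field_simp
  have hne : δ ≠ -δ := by linarith
  rw [Finset.sum_product]
  simp only [Finset.sum_pair hne]
  calc _ ≤ ∑ n ∈ Finset.range K, 16 * C * C₀ / r₁ ^ 2 * zoneTerm Ω N 1 R h n :=
        Finset.sum_le_sum fun n _ => (add_le_add (hshift n (abs_of_pos hδ))
          (hshift n ((abs_neg δ).trans (abs_of_pos hδ)))).trans_eq (by ring)
    _ ≤ 16 * C * C₀ / r₁ ^ 2 * zoneBound Ω N 1 R h := by
        rw [← Finset.mul_sum]
        gcongr
        exact sum_zoneTerm_le hΩ.isBounded hN hR0 1 _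

lemma exists_meanSquare_le_zoneBound (hr₁ : 0 < r₁) (r₂ : ℝ) (hN : 2 ≤ N) :
    ∃ C : ℝ, 0 ≤ C ∧ ∀ {Ω : Set E2} {R h : ℝ}, PinchedDomain r₁ r₂ Ω → 2 ≤ R → 1 ≤ h → h ≤ R →
      meanSquare Ω R h ≤ C * zoneBound Ω N 1 R h + C * Real.log R := by
  obtain ⟨C₀, hC₀, hmollifier⟩ := exists_periodizedMollifier_ek (ε := r₁ / 4) (by positivity)
    (M := N + 8) (by lia)
  obtain ⟨C₁, hC₁, hzones⟩ := exists_sum_quadraticMean_shift_le hN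
  obtain ⟨A, hA, hrest⟩ := exists_abs_latticeRest_le_sum r₁ r₂
  let B := C₁ * C₀ / r₁ ^ 2
  let D := A * (C₀ + 1)
  have hB : 0 ≤ B := by positivity
  have hD : 0 ≤ D := by positivity
  refine ⟨B + D, by positivity, fun {Ω R h} hΩ hR hh hhR => ?_⟩
  have hR0 : 0 < R := by linarith
  have hlog : 0 ≤ Real.log R := by linarith [half_le_log hR]
  have hbound : 0 ≤ zoneBound Ω N 1 R h := zoneBound_nonneg hR0 1
  obtain ⟨f, P, c, hP, hc⟩ := hmollifier R hR0
  have hdecay (M : ℕ) (hM : M ≤ N + 8) := norm_le_of_norm_le_inv_pow hR0 hC₀.le hM hc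
  obtain ⟨K, hK⟩ := pow_unbounded_of_one_lt (R ^ 3) (one_lt_two (α := ℝ))
  obtain ⟨δ, hδ⟩ : ∃ δ, δ = 1 / (4 * R) := ⟨_, rfl⟩
  have hδ1 : δ ≤ 1 / 8 := hδ ▸ one_div_le_one_div_of_le (by norm_num) (by linarith)
  have hradius : r₁ / 4 / R = r₁ * δ := by rw [hδ]; field_simp
  rw [hradius] at hP
  have hsum := hzones hΩ hR hh
    (fun m => by simpa only [omegaR_eq_inv_pow N hR0] using hdecay N (by lia) m) hC₀.le
    (hδ ▸ by positivity) (by linarith : δ ≤ h / 2) (K + 1)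
  have hcont (p : ℕ × ℝ) :
      Continuous fun t => 8 * R ^ 2 / r₁ ^ 2 * ‖zoneSum r₁ R Ω c p.1 (t + p.2)‖ := by
    have := continuous_zoneSum (c := c) (R := R) hΩ p.1
    fun_prop
  have hrest_le : ∀ t ∈ Icc R (R + h), |latticeRest Ω t| ≤ _ := fun t ht =>
    hrest hΩ hP hR hδ hC₀.le (hdecay 8 (by lia))
      (hK.le.trans (pow_le_pow_right₀ one_le_two K.le_succ)) ht.1 (by linarith [ht.2])
  calc meanSquare Ω R h ≤ _ + D * Real.log R :=
        quadraticMean_le_sum_add (by linarith) (by positivity) hcont hrest_le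
    _ ≤ B * zoneBound Ω N 1 R h + D * Real.log R := by gcongr
    _ ≤ (B + D) * zoneBound Ω N 1 R h + (B + D) * Real.log R := by gcongr <;> linarith

theorem statement4_general {r₁ : ℝ} (hr₁ : 0 < r₁) (r₂ : ℝ) {N : ℕ} (hN : 2 ≤ N) :
    ∃ C : ℝ, 0 ≤ C ∧ ∀ Ω : Set E2, Convex ℝ Ω → IsOpen Ω →
      Metric.ball 0 r₁ ⊆ Ω → Ω ⊆ Metric.closedBall 0 r₂ →
      ∀ R h : ℝ, 2 ≤ R → 1 ≤ h → h ≤ R →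
        meanSquare Ω R h ≤ C * zoneBound Ω N 1 R h + C * Real.log R := by
  obtain ⟨C, hC, H⟩ := exists_meanSquare_le_zoneBound (lt_min hr₁ one_pos) r₂ hN
  exact ⟨C, hC, fun Ω hconv hopen hball hsub R h => H ⟨lt_min hr₁ one_pos, min_le_right _ _, hconv,
    hopen, (Metric.ball_subset_ball (min_le_left _ _)).trans hball, hsub⟩⟩

end

/-- Proposition 2.4: for any bounded open convex planar domain `Ω` with
inscribed and circumscribed radii `r₁ < 1 < r₂` about the origin, and any `N ≥ 2`,
`𝒢_Ω(R,h) ≤ C Σ_± [Σ_{2ⁿ≤R/h} 𝔅_n^± + Σ_{R/h<2ⁿ≤R} 𝔅̃_n^± + Σ_{2ⁿ>R} Γ_n^±]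
+ C[log R + (R/h)^{1/2}]` for `R ≥ 2`, `1 ≤ h ≤ R`, where `C = C(r₁,r₂,N)`. -/
theorem statement4 (r₁ r₂ : ℝ) (hr₁ : 0 < r₁) (h1 : r₁ < 1) (h2 : 1 < r₂)
    (N : ℕ) (hN : 2 ≤ N) :
    ∃ C : ℝ, ∀ Ω : Set E2, Convex ℝ Ω → IsOpen Ω → Bornology.IsBounded Ω →
      Metric.ball 0 r₁ ⊆ Ω → Ω ⊆ Metric.closedBall 0 r₂ →
      ∀ R h : ℝ, 2 ≤ R → 1 ≤ h → h ≤ R →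
        meanSquare Ω R h ≤
          C * (∑ s ∈ ({1, -1} : Finset ℝ),
              ((∑' n : ℕ, if (2 : ℝ) ^ n ≤ R / h then Bn Ω N s R h n else 0) +
               (∑' n : ℕ, if R / h < (2 : ℝ) ^ n ∧ (2 : ℝ) ^ n ≤ R then Bnt Ω N s R h n else 0) +
               (∑' n : ℕ, if R < (2 : ℝ) ^ n then Gam Ω N R n else 0))) +
            C * (Real.log R + Real.sqrt (R / h)) := by
  obtain ⟨C, hC, H⟩ := statement4_general hr₁ r₂ hN
  refine ⟨C, fun Ω hconv hopen _ hball hsub R h hR hh hhR => ?_⟩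
  have hone : zoneBound Ω N 1 R h ≤ ∑ s ∈ {1, -1}, zoneBound Ω N s R h :=
    Finset.single_le_sum (fun s _ => zoneBound_nonneg (by linarith) s)
      (Finset.mem_insert_self 1 {-1})
  calc meanSquare Ω R h ≤ C * zoneBound Ω N 1 R h + C * Real.log R :=
        H Ω hconv hopen hball hsub R h hR hh hhR
    _ ≤ C * (∑ s ∈ {1, -1}, zoneBound Ω N s R h) + C * (Real.log R + √(R / h)) := by
        gcongr
        exact le_add_of_nonneg_right (Real.sqrt_nonneg _)

end
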